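/- arXiv:2509.24583 — 4 statements merged into one kernel-verified Lean document; each statement's English description precedes it below -/
import Mathlib

section
/- For every modal μ-calculus formula φ over signature σ and all n, d ∈ ℕ, the following are equivalent: (1) φ and ¬φ are joint ≈^n_σ-consistent over T^d; (2) φ and ¬φ are joint ≅^n_σ-consistent over T^d (i.e., there exist M, M' ∈ T^d with M ⊨ φ, M' ⊨ ¬φ and M ≅^n_σ M'). -/
/-- Formulae of the modal μ-calculus (in negation normal form). -/
inductive Form : Type
  | pos : ℕ → Form
  | neg : ℕ → Form
  | or  : Form → Form → Form
  | and : Form → Form → Form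
  | dia : Form → Form
  | box : Form → Form
  | var : ℕ → Form
  | mu  : ℕ → Form → Form
  | nu  : ℕ → Form → Form

namespace Form

/-- Fixpoint-free formulae: modal logic ML. -/
def IsML : Form → Prop
  | pos _ => True
  | neg _ => True
  | or φ ψ => IsML φ ∧ IsML ψ
  | and φ ψ => IsML φ ∧ IsML ψ
  | dia φ => IsML φ
  | box φ => IsML φ
  | var _ => False
  | mu _ _ => False
  | nu _ _ => False

/-- Modal depth: maximal nesting of ◇ and □. -/
def depth : Form → ℕ
  | pos _ => 0
  | neg _ => 0
  | or φ ψ => max φ.depth ψ.depth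
  | and φ ψ => max φ.depth ψ.depth
  | dia φ => φ.depth + 1
  | box φ => φ.depth + 1
  | var _ => 0
  | mu _ φ => φ.depth
  | nu _ φ => φ.depth

/-- The set of propositions occurring in a formula. -/
def sig : Form → Set ℕ
  | pos p => {p}
  | neg p => {p}
  | or φ ψ => φ.sig ∪ ψ.sig
  | and φ ψ => φ.sig ∪ ψ.sig
  | dia φ => φ.sig
  | box φ => φ.sig
  | var _ => ∅
  | mu _ φ => φ.sig
  | nu _ φ => φ.sig

/-- The size of a formula (its length as a string, up to a constant factor). -/
def size : Form → ℕ
  | pos _ => 1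
  | neg _ => 2
  | or φ ψ => φ.size + ψ.size + 1
  | and φ ψ => φ.size + ψ.size + 1
  | dia φ => φ.size + 1
  | box φ => φ.size + 1
  | var _ => 1
  | mu _ φ => φ.size + 2
  | nu _ φ => φ.size + 2

end Form

/-- A set has at least `g` elements. -/
def AtLeastCard {W : Type} (g : ℕ) (S : Set W) : Prop :=
  ∃ f : Fin g → W, Function.Injective f ∧ ∀ i, f i ∈ S

/-- Pointed Kripke structures. -/
structure Model : Type 1 where
  W : Type
  root : W
  R : W → W → Prop
  val : W → ℕ → Prop

namespace Model

/-- Semantics of the μ-calculus, via Knaster–Tarski style clauses. -/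
def interp (M : Model) : Form → (ℕ → Set M.W) → Set M.W
  | .pos p, _ => {w | M.val w p}
  | .neg p, _ => {w | ¬ M.val w p}
  | .or φ ψ, e => M.interp φ e ∪ M.interp ψ e
  | .and φ ψ, e => M.interp φ e ∩ M.interp ψ e
  | .dia φ, e => {w | ∃ v, M.R w v ∧ v ∈ M.interp φ e}
  | .box φ, e => {w | ∀ v, M.R w v → v ∈ M.interp φ e}
  | .var x, e => e x
  | .mu x φ, e => sInf {S : Set M.W | M.interp φ (Function.update e x S) ⊆ S}
  | .nu x φ, e => sSup {S : Set M.W | S ⊆ M.interp φ (Function.update e x S)}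

/-- `M ⊨ φ`: the root of `M` satisfies `φ`. -/
def Sat (M : Model) (φ : Form) : Prop := M.root ∈ M.interp φ fun _ => ∅

/-- Points reachable from the root in exactly `k` steps (in a tree: points of depth `k`). -/
def stepsTo (M : Model) : ℕ → M.W → Prop
  | 0, w => w = M.root
  | (k+1), w => ∃ v, M.stepsTo k v ∧ M.R v w

/-- Membership in the `n`-prefix: depth at most `n`. -/
def InPrefix (M : Model) (n : ℕ) (w : M.W) : Prop := ∃ k ≤ n, M.stepsTo k w

/-- Tree models: every point is reachable from the root, the root has no predecessor,
and every point has at most one predecessor. -/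
def IsTree (M : Model) : Prop :=
  (∀ w, Relation.ReflTransGen M.R M.root w) ∧
  (∀ w, ¬ M.R w M.root) ∧
  (∀ w v v', M.R v w → M.R v' w → v = v')

/-- Outdegree at most `d`. -/
def outdegLE (M : Model) (d : ℕ) : Prop :=
  ∀ w, ¬ AtLeastCard (d+1) {v | M.R w v}

end Model

/-- The class `T^d` of all tree models of outdegree at most `d`. -/
def TreeC (d : ℕ) : Set Model := {M | M.IsTree ∧ M.outdegLE d}

/-- `(σ,n)`-bisimulations: bisimulations between the `n`-prefixes of the `σ`-reducts,
relating only points of equal depth and linking the roots. -/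
structure IsNBisim (M M' : Model) (σ : Set ℕ) (n : ℕ) (Z : M.W → M'.W → Prop) : Prop where
  root : Z M.root M'.root
  depthEq : ∀ ⦃w w'⦄, Z w w' → ∃ k ≤ n, M.stepsTo k w ∧ M'.stepsTo k w'
  base : ∀ ⦃w w'⦄, Z w w' → ∀ p ∈ σ, (M.val w p ↔ M'.val w' p)
  forth : ∀ ⦃w w'⦄, Z w w' → ∀ k, k < n → M.stepsTo k w →
      ∀ v, M.R w v → ∃ v', M'.R w' v' ∧ Z v v'
  back : ∀ ⦃w w'⦄, Z w w' → ∀ k, k < n → M'.stepsTo k w' →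
      ∀ v', M'.R w' v' → ∃ v, M.R w v ∧ Z v v'

/-- `(σ,n)`-isomorphisms: `(σ,n)`-bisimulations bijective on the `n`-prefixes. -/
def IsNIso (M M' : Model) (σ : Set ℕ) (n : ℕ) (Z : M.W → M'.W → Prop) : Prop :=
  IsNBisim M M' σ n Z ∧
  (∀ w w₁' w₂', Z w w₁' → Z w w₂' → w₁' = w₂') ∧
  (∀ w₁ w₂ w', Z w₁ w' → Z w₂ w' → w₁ = w₂) ∧
  (∀ w, M.InPrefix n w → ∃ w', Z w w') ∧
  (∀ w', M'.InPrefix n w' → ∃ w, Z w w')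

/-- `M ≈ⁿ_σ M'`. -/
def NBisimEq (M M' : Model) (σ : Set ℕ) (n : ℕ) : Prop := ∃ Z, IsNBisim M M' σ n Z

/-- `M ≅ⁿ_σ M'`. -/
def NIsoEq (M M' : Model) (σ : Set ℕ) (n : ℕ) : Prop := ∃ Z, IsNIso M M' σ n Z

/-- `ψ` separates `φ` from `φ'` over the class `C`: `φ ⊨ ψ` and `ψ ⊨ ¬φ'` over `C`. -/
def Separates (C : Set Model) (ψ φ φ' : Form) : Prop :=
  (∀ M ∈ C, M.Sat φ → M.Sat ψ) ∧ (∀ M ∈ C, M.Sat ψ → ¬ M.Sat φ')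

/-- A relation satisfying the base, forth and back conditions preserves the truth of formulae. -/
theorem Model.interp_of_bisim {M M' : Model} {σ : Set ℕ} {Z : M.W → M'.W → Prop}
    (base : ∀ w w', Z w w' → ∀ p ∈ σ, (M.val w p ↔ M'.val w' p))
    (forth : ∀ w w', Z w w' → ∀ v, M.R w v → ∃ v', M'.R w' v' ∧ Z v v')
    (back : ∀ w w', Z w w' → ∀ v', M'.R w' v' → ∃ v, M.R w v ∧ Z v v')
    (φ : Form) (hsig : φ.sig ⊆ σ) (e : ℕ → Set M.W) (e' : ℕ → Set M'.W)
    (he : ∀ x w w', Z w w' → w ∈ e x → w' ∈ e' x) (w : M.W) (w' : M'.W) (hZ : Z w w')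
    (hw : w ∈ M.interp φ e) : w' ∈ M'.interp φ e' := by
  have update_mono : ∀ {e : ℕ → Set M.W} {e' : ℕ → Set M'.W},
      (∀ x w w', Z w w' → w ∈ e x → w' ∈ e' x) → ∀ (x : ℕ) (S : Set M.W) (S' : Set M'.W),
      (∀ w w', Z w w' → w ∈ S → w' ∈ S') → ∀ y w w', Z w w' →
        w ∈ Function.update e x S y → w' ∈ Function.update e' x S' y := by
    intro e e' he x S S' hS y
    rcases eq_or_ne y x with rfl | hy
    · simpa using hS
    · simpa [Function.update_of_ne hy] using he y
  induction φ generalizing e e' w w' with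
  | pos p => exact (base w w' hZ p (hsig rfl)).1 hw
  | neg p => exact fun h => hw ((base w w' hZ p (hsig rfl)).2 h)
  | or φ ψ ihφ ihψ =>
    exact hw.imp (ihφ (Set.subset_union_left.trans hsig) e e' he w w' hZ)
      (ihψ (Set.subset_union_right.trans hsig) e e' he w w' hZ)
  | and φ ψ ihφ ihψ =>
    exact hw.imp (ihφ (Set.subset_union_left.trans hsig) e e' he w w' hZ)
      (ihψ (Set.subset_union_right.trans hsig) e e' he w w' hZ)
  | dia φ ih =>
    obtain ⟨v, hR, hv⟩ := hw
    obtain ⟨v', hR', hZ'⟩ := forth w w' hZ v hR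
    exact ⟨v', hR', ih hsig e e' he v v' hZ' hv⟩
  | box φ ih =>
    intro v' hR'
    obtain ⟨v, hR, hZ'⟩ := back w w' hZ v' hR'
    exact ih hsig e e' he v v' hZ' (hw v hR)
  | var x => exact he x w w' hZ hw
  | mu x φ ih =>
    intro S' hS'
    let S : Set M.W := {u | ∀ u', Z u u' → u' ∈ S'}
    refine hw S (fun u hu u' hZu => hS' ?_) w' hZ
    exact ih hsig _ _ (update_mono he x S S' fun u u' hZu hu => hu u' hZu) u u' hZu hu
  | nu x φ ih =>
    obtain ⟨S, hS, hwS⟩ := hw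
    let S' : Set M'.W := {u' | ∃ u ∈ S, Z u u'}
    refine ⟨S', ?_, w, hwS, hZ⟩
    rintro u' ⟨u, hu, hZu⟩
    exact ih hsig _ _ (update_mono he x S S' fun v v' hZv hv => ⟨v, hv, hZv⟩) u u' hZu (hS hu)

theorem IsNIso.symm {M M' : Model} {σ : Set ℕ} {n : ℕ} {Z : M.W → M'.W → Prop}
    (h : IsNIso M M' σ n Z) : IsNIso M' M σ n fun w' w => Z w w' := by
  obtain ⟨hZ, hfun, hinj, htot, hsurj⟩ := h
  refine ⟨⟨hZ.root, ?_, ?_, ?_, ?_⟩, fun w' w₁ w₂ => hinj w₁ w₂ w',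
    fun w₁' w₂' w => hfun w w₁' w₂', hsurj, htot⟩
  · intro w' w h
    obtain ⟨k, hk, hw, hw'⟩ := hZ.depthEq h
    exact ⟨k, hk, hw', hw⟩
  · exact fun w' w h p hp => (hZ.base h p hp).symm
  · exact fun w' w h => hZ.back h
  · exact fun w' w h => hZ.forth h

theorem NIsoEq.symm {M M' : Model} {σ : Set ℕ} {n : ℕ} (h : NIsoEq M M' σ n) :
    NIsoEq M' M σ n :=
  let ⟨_, hZ⟩ := h
  ⟨_, hZ.symm⟩

namespace Model

/-- The restriction of a model to its `n`-prefix. -/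
def truncate (M : Model) (n : ℕ) : Model where
  W := {w // M.InPrefix n w}
  root := ⟨M.root, 0, n.zero_le, rfl⟩
  R := fun w v => M.R w.1 v.1
  val := fun w => M.val w.1

theorem stepsTo_truncate {M : Model} {n k : ℕ} (hk : k ≤ n) {w : M.W} (h : M.stepsTo k w) :
    (M.truncate n).stepsTo k ⟨w, k, hk, h⟩ := by
  induction k generalizing w with
  | zero => exact Subtype.ext h
  | succ k ih =>
    obtain ⟨v, hv, hR⟩ := h
    exact ⟨_, ih (Nat.le_of_succ_le hk) hv, hR⟩

theorem reachable_of_stepsTo {M : Model} {k : ℕ} {w : M.W} (h : M.stepsTo k w) :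
    Relation.ReflTransGen M.R M.root w := by
  induction k generalizing w with
  | zero => exact h ▸ .refl
  | succ k ih =>
    obtain ⟨v, hv, hR⟩ := h
    exact (ih hv).tail hR

theorem truncate_mem_treeC {M : Model} {d : ℕ} (hM : M ∈ TreeC d) (n : ℕ) :
    M.truncate n ∈ TreeC d := by
  obtain ⟨⟨-, hroot, hpred⟩, hdeg⟩ := hM
  refine ⟨⟨?_, fun w => hroot w.1, fun w v v' h h' => Subtype.ext (hpred _ _ _ h h')⟩, ?_⟩
  · rintro ⟨w, k, hk, hw⟩
    exact reachable_of_stepsTo (stepsTo_truncate hk hw)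
  · rintro w ⟨f, hf, hR⟩
    exact hdeg w.1 ⟨fun i => (f i).1, Subtype.val_injective.comp hf, hR⟩

theorem nIsoEq_truncate (M : Model) (σ : Set ℕ) (n : ℕ) : NIsoEq M (M.truncate n) σ n := by
  refine ⟨fun w v => w = v.1, ⟨rfl, ?_, ?_, ?_, ?_⟩, ?_, ?_, ?_, ?_⟩
  · rintro _ ⟨w, k, hk, hw⟩ rfl
    exact ⟨k, hk, hw, stepsTo_truncate hk hw⟩
  · rintro _ w rfl p -
    exact Iff.rfl
  · rintro _ w rfl k hk hw v hR
    exact ⟨⟨v, k + 1, hk, w.1, hw, hR⟩, hR, rfl⟩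
  · rintro _ w rfl k - - v hR
    exact ⟨v.1, hR, rfl⟩
  · exact fun w v v' h h' => Subtype.ext (h.symm.trans h')
  · exact fun w w' v h h' => h.trans h'.symm
  · exact fun w hw => ⟨⟨w, hw⟩, rfl⟩
  · exact fun v _ => ⟨v.1, rfl⟩

/-- In a tree, a point with a successor in the `n`-prefix has depth less than `n`. -/
theorem IsTree.exists_stepsTo_lt {M : Model} (hM : M.IsTree) {n : ℕ} {w v : M.W}
    (hR : M.R w v) (hv : M.InPrefix n v) : ∃ k < n, M.stepsTo k w := by
  obtain ⟨_ | k, hk, hv⟩ := hv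
  · cases hv
    exact (hM.2.1 w hR).elim
  · obtain ⟨u, hu, hRu⟩ := hv
    cases hM.2.2 v w u hR hRu
    exact ⟨k, hk, hu⟩

/-- Formulae over `σ` are preserved between the truncations of `(σ,n)`-bisimilar trees. -/
theorem sat_truncate_of_nBisimEq {M M' : Model} (hM : M.IsTree) (hM' : M'.IsTree) {σ : Set ℕ}
    {n : ℕ} (h : NBisimEq M M' σ n) {φ : Form} (hsig : φ.sig ⊆ σ)
    (hφ : (M.truncate n).Sat φ) : (M'.truncate n).Sat φ := by
  obtain ⟨Z, hZ⟩ := h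
  refine interp_of_bisim (M := M.truncate n) (M' := M'.truncate n) (σ := σ)
    (Z := fun w w' => Z w.1 w'.1) (fun w w' h => hZ.base h) ?_ ?_
    φ hsig _ _ (fun _ _ _ _ h => h.elim) _ _ hZ.root hφ
  · intro w w' h v hR
    obtain ⟨k, hk, hw⟩ := hM.exists_stepsTo_lt hR v.2
    obtain ⟨v', hR', hv⟩ := hZ.forth h k hk hw v.1 hR
    obtain ⟨j, hj, -, hv'⟩ := hZ.depthEq hv
    exact ⟨⟨v', j, hj, hv'⟩, hR', hv⟩
  · intro w w' h v' hR'
    obtain ⟨k, hk, hw'⟩ := hM'.exists_stepsTo_lt hR' v'.2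
    obtain ⟨v, hR, hv⟩ := hZ.back h k hk hw' v'.1 hR'
    obtain ⟨j, hj, hv', -⟩ := hZ.depthEq hv
    exact ⟨⟨v, j, hj, hv'⟩, hR, hv⟩

end Model

/-- Otto's lemma: joint `≈ⁿ_σ`-consistency of `φ, ¬φ` over `T^d` coincides
with joint `≅ⁿ_σ`-consistency. -/
theorem stmt_2 (φ : Form) (σ : Set ℕ) (hσ : σ.Finite) (hsig : φ.sig ⊆ σ) (n d : ℕ) :
    (∃ M ∈ TreeC d, ∃ M' ∈ TreeC d, M.Sat φ ∧ ¬ M'.Sat φ ∧ NBisimEq M M' σ n) ↔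
    (∃ M ∈ TreeC d, ∃ M' ∈ TreeC d, M.Sat φ ∧ ¬ M'.Sat φ ∧ NIsoEq M M' σ n) := by
  constructor
  · rintro ⟨M, hM, M', hM', hφ, hφ', hZ⟩
    by_cases h : (M.truncate n).Sat φ
    · exact ⟨_, Model.truncate_mem_treeC hM' n, M', hM',
        Model.sat_truncate_of_nBisimEq hM.1 hM'.1 hZ hsig h, hφ',
        (M'.nIsoEq_truncate σ n).symm⟩
    · exact ⟨M, hM, _, Model.truncate_mem_treeC hM n, hφ, h, M.nIsoEq_truncate σ n⟩
  · rintro ⟨M, hM, M', hM', hφ, hφ', Z, hZ⟩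
    exact ⟨M, hM, M', hM', hφ, hφ', Z, hZ.1⟩
end

section
/- For all modal μ-calculus formulae φ, φ' over signature σ and every n ∈ ℕ, the following are equivalent: (1) φ and φ' are joint ≈^n_σ-consistent over the class of all models; (2) φ and φ' are joint ≅^n_σ-consistent over T^d, where d = |φ| + |φ'| (the sum of the sizes of φ and φ' as strings). -/
namespace Model

theorem interp_mono (M : Model) (φ : Form) :
    ∀ {e e' : ℕ → Set M.W}, e ≤ e' → M.interp φ e ⊆ M.interp φ e' := by
  induction φ with
  | pos p => intro e e' h; exact subset_rfl
  | neg p => intro e e' h; exact subset_rfl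
  | or φ ψ ihφ ihψ => intro e e' h; exact Set.union_subset_union (ihφ h) (ihψ h)
  | and φ ψ ihφ ihψ => intro e e' h; exact Set.inter_subset_inter (ihφ h) (ihψ h)
  | dia φ ih => rintro e e' h w ⟨v, hv, hvφ⟩; exact ⟨v, hv, ih h hvφ⟩
  | box φ ih => intro e e' h w hw v hv; exact ih h (hw v hv)
  | var x => intro e e' h; exact h x
  | mu x φ ih =>
    intro e e' h
    exact sInf_le_sInf fun S hS =>
      (ih (update_le_update_iff.2 ⟨le_rfl, fun y _ => h y⟩)).trans hS
  | nu x φ ih =>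
    intro e e' h
    exact sSup_le_sSup fun S hS =>
      hS.trans (ih (update_le_update_iff.2 ⟨le_rfl, fun y _ => h y⟩))

theorem interp_mu_subset (M : Model) (x : ℕ) (φ : Form) (e : ℕ → Set M.W) :
    M.interp φ (Function.update e x (M.interp (.mu x φ) e)) ⊆ M.interp (.mu x φ) e :=
  le_sInf fun _ hS => (M.interp_mono φ
    (update_le_update_iff.2 ⟨sInf_le hS, fun _ _ => le_rfl⟩)).trans hS

theorem subset_interp_nu (M : Model) (x : ℕ) (φ : Form) (e : ℕ → Set M.W) :
    M.interp (.nu x φ) e ⊆ M.interp φ (Function.update e x (M.interp (.nu x φ) e)) :=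
  sSup_le fun _ hS => hS.trans (M.interp_mono φ
    (update_le_update_iff.2 ⟨le_sSup hS, fun _ _ => le_rfl⟩))

/-- The map `π` is a functional simulation of `N` by `M` such that every point of `N` has
successors above all the successors selected by the strategy `C`. -/
structure Follows (N M : Model) (C : M.W → List M.W) (π : N.W → M.W) : Prop where
  val : ∀ x p, N.val x p ↔ M.val (π x) p
  forth : ∀ x y, N.R x y → M.R (π x) (π y)
  cover : ∀ x, ∀ v ∈ C (π x), ∃ y, N.R x y ∧ π y = v

theorem Follows.mono {N M : Model} {C D : M.W → List M.W} {π : N.W → M.W}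
    (h : Follows N M D π) (hCD : ∀ w, C w ⊆ D w) : Follows N M C π :=
  ⟨h.val, h.forth, fun x v hv => h.cover x v (hCD _ hv)⟩

/-- The strategy `C` selects at most `|φ|` successors of every point, and all models following
it preserve `φ` under each of the environments `e i`. -/
structure IsStrategy (M : Model) (φ : Form) {ι : Type 1} (e : ι → ℕ → Set M.W)
    (C : M.W → List M.W) : Prop where
  length_le : ∀ w, (C w).length ≤ φ.size
  succ : ∀ w, ∀ v ∈ C w, M.R w v
  preserves : ∀ (N : Model) (π : N.W → M.W), Follows N M C π → ∀ i x,
    π x ∈ M.interp φ (e i) → x ∈ N.interp φ fun y => π ⁻¹' e i y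

theorem preimage_update {W V : Type} (π : V → W) (e : ℕ → Set W) (x : ℕ) (S : Set W) :
    (fun y => π ⁻¹' Function.update e x S y) =
      Function.update (fun y => π ⁻¹' e y) x (π ⁻¹' S) := by
  funext y
  by_cases h : y = x
  · subst h; simp
  · simp [h]

/-- Stages of the least fixpoint of `φ` in the variable `x`, along a well-ordered family of
environments. -/
noncomputable def stage (M : Model) (x : ℕ) (φ : Form) {ι : Type 1} [LinearOrder ι]
    [WellFoundedLT ι] (e : ι → ℕ → Set M.W) : ι ×ₗ Ordinal.{0} → Set M.W :=
  WellFoundedLT.fix fun p S =>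
    ⋃ (q : ι ×ₗ Ordinal.{0}) (h : q < p),
      M.interp φ (Function.update (e (ofLex q).1) x (S q h))

section stage

variable (M : Model) (x : ℕ) (φ : Form) {ι : Type 1} [LinearOrder ι] [WellFoundedLT ι]
  (e : ι → ℕ → Set M.W)

theorem mem_stage (p : ι ×ₗ Ordinal.{0}) (w : M.W) :
    w ∈ M.stage x φ e p ↔ ∃ q < p,
      w ∈ M.interp φ (Function.update (e (ofLex q).1) x (M.stage x φ e q)) := by
  rw [stage, WellFoundedLT.fix_eq]
  simp only [Set.mem_iUnion, exists_prop]

theorem stage_mono : Monotone (M.stage x φ e) := by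
  intro p q hpq w hw
  rw [mem_stage] at hw ⊢
  obtain ⟨r, hr, hw⟩ := hw
  exact ⟨r, hr.trans_le hpq, hw⟩

theorem exists_interp_mu_subset_stage (i : ι) :
    ∃ α, M.interp (.mu x φ) (e i) ⊆ M.stage x φ e (toLex (i, α)) := by
  have key : ∀ α β : Ordinal.{0}, α < β →
      M.stage x φ e (toLex (i, α)) = M.stage x φ e (toLex (i, β)) →
      ∃ α, M.interp (.mu x φ) (e i) ⊆ M.stage x φ e (toLex (i, α)) := by
    intro α β hαβ h
    refine ⟨α, sInf_le fun w hw => ?_⟩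
    rw [h, mem_stage]
    exact ⟨toLex (i, α), Prod.Lex.toLex_lt_toLex.2 (Or.inr ⟨rfl, hαβ⟩), hw⟩
  have h := not_injective_of_ordinal.{0} fun α => M.stage x φ e (toLex (i, α))
  simp only [Function.Injective, not_forall] at h
  obtain ⟨α, β, h, hne⟩ := h
  rcases lt_or_gt_of_ne hne with hlt | hlt
  · exact key α β hlt h
  · exact key β α hlt h.symm

end stage

/-- Memoryless determinacy, in the form of strategies that work uniformly along a well-ordered
increasing family of environments. -/
theorem exists_isStrategy (M : Model) (φ : Form) :
    ∀ {ι : Type 1} [LinearOrder ι] [WellFoundedLT ι] (e : ι → ℕ → Set M.W), Monotone e →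
      ∃ C, M.IsStrategy φ e C := by
  classical
  induction φ with
  | pos p =>
    intro ι _ _ e he
    exact ⟨fun _ => [], by simp, by simp, fun N π h i x hx => (h.val x p).2 hx⟩
  | neg p =>
    intro ι _ _ e he
    exact ⟨fun _ => [], by simp, by simp, fun N π h i x hx => fun hp => hx ((h.val x p).1 hp)⟩
  | or φ ψ ihφ ihψ =>
    intro ι _ _ e he
    obtain ⟨C, hC⟩ := ihφ e he
    obtain ⟨D, hD⟩ := ihψ e he
    refine ⟨fun w => C w ++ D w, fun w => ?_, fun w v hv => ?_, fun N π h i x hx => ?_⟩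
    · have := hC.length_le w
      have := hD.length_le w
      simp only [List.length_append, Form.size]
      omega
    · exact (List.mem_append.1 hv).elim (hC.succ w v) (hD.succ w v)
    · exact hx.imp
        (hC.preserves N π (h.mono fun w => List.subset_append_left _ _) i x)
        (hD.preserves N π (h.mono fun w => List.subset_append_right _ _) i x)
  | and φ ψ ihφ ihψ =>
    intro ι _ _ e he
    obtain ⟨C, hC⟩ := ihφ e he
    obtain ⟨D, hD⟩ := ihψ e he
    refine ⟨fun w => C w ++ D w, fun w => ?_, fun w v hv => ?_, fun N π h i x hx => ?_⟩
    · have := hC.length_le w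
      have := hD.length_le w
      simp only [List.length_append, Form.size]
      omega
    · exact (List.mem_append.1 hv).elim (hC.succ w v) (hD.succ w v)
    · exact hx.imp
        (hC.preserves N π (h.mono fun w => List.subset_append_left _ _) i x)
        (hD.preserves N π (h.mono fun w => List.subset_append_right _ _) i x)
  | dia φ ih =>
    intro ι _ _ e he
    obtain ⟨C, hC⟩ := ih e he
    have hchoice : ∀ w, ∃ v, (∃ i, w ∈ M.interp (.dia φ) (e i)) →
        M.R w v ∧ ∀ i, w ∈ M.interp (.dia φ) (e i) → v ∈ M.interp φ (e i) := by
      intro w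
      by_cases hw : ∃ i, w ∈ M.interp (.dia φ) (e i)
      · obtain ⟨i, ⟨v, hv, hvφ⟩, hmin⟩ :=
          WellFounded.has_min (wellFounded_lt (α := ι)) {i | w ∈ M.interp (.dia φ) (e i)} hw
        exact ⟨v, fun _ => ⟨hv, fun j hj =>
          M.interp_mono φ (he (not_lt.1 (hmin j hj))) hvφ⟩⟩
      · exact ⟨w, fun h => (hw h).elim⟩
    choose f hf using hchoice
    refine ⟨fun w => if ∃ i, w ∈ M.interp (.dia φ) (e i) then f w :: C w else C w,
      fun w => ?_, fun w v hv => ?_, fun N π h i x hx => ?_⟩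
    · have := hC.length_le w
      split_ifs <;> simp only [List.length_cons, Form.size] <;> omega
    · split_ifs at hv with hw
      · rcases List.mem_cons.1 hv with rfl | hv
        · exact (hf w hw).1
        · exact hC.succ w v hv
      · exact hC.succ w v hv
    · have hw : ∃ i, π x ∈ M.interp (.dia φ) (e i) := ⟨i, hx⟩
      obtain ⟨y, hxy, hy⟩ := h.cover x (f (π x)) (by rw [if_pos hw]; exact List.mem_cons_self)
      refine ⟨y, hxy, hC.preserves N π (h.mono fun w => ?_) i y ?_⟩
      · split_ifs
        · exact List.subset_cons_self _ _
        · exact List.Subset.refl _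
      · rw [hy]
        exact (hf _ hw).2 i hx
  | box φ ih =>
    intro ι _ _ e he
    obtain ⟨C, hC⟩ := ih e he
    exact ⟨C, fun w => (hC.length_le w).trans (Nat.le_succ _), hC.succ, fun N π h i x hx y hxy =>
      hC.preserves N π h i y (hx _ (h.forth x y hxy))⟩
  | var y =>
    intro ι _ _ e he
    exact ⟨fun _ => [], by simp, by simp, fun N π h i x hx => hx⟩
  | mu y φ ih =>
    intro ι _ _ e he
    obtain ⟨C, hC⟩ := ih
      (fun p : ι ×ₗ Ordinal.{0} => Function.update (e (ofLex p).1) y (M.stage y φ e p))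
      (fun p q hpq => update_le_update_iff.2
        ⟨M.stage_mono y φ e hpq, fun z _ => he (Prod.Lex.monotone_fst _ _ hpq) z⟩)
    refine ⟨C, fun w => (hC.length_le w).trans (Nat.le_add_right _ 2), hC.succ,
      fun N π h i x hx => ?_⟩
    have hmono : ∀ {i j : ι}, i ≤ j → N.interp (.mu y φ) (fun z => π ⁻¹' e i z) ⊆
        N.interp (.mu y φ) (fun z => π ⁻¹' e j z) := fun hij =>
      N.interp_mono _ fun z => Set.preimage_mono (he hij z)
    have key : ∀ p : ι ×ₗ Ordinal.{0}, π ⁻¹' M.stage y φ e p ⊆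
        N.interp (.mu y φ) (fun z => π ⁻¹' e (ofLex p).1 z) := by
      intro p
      induction p using WellFoundedLT.induction with
      | ind p ihp =>
        intro x hx
        obtain ⟨q, hqp, hq⟩ := (M.mem_stage y φ e p (π x)).1 hx
        have hxq := hC.preserves N π h q x hq
        rw [preimage_update] at hxq
        refine hmono (Prod.Lex.monotone_fst _ _ hqp.le) (N.interp_mu_subset y φ _ ?_)
        exact N.interp_mono φ
          (update_le_update_iff.2 ⟨ihp q hqp, fun _ _ => le_rfl⟩) hxq
    obtain ⟨α, hα⟩ := M.exists_interp_mu_subset_stage y φ e i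
    exact key (toLex (i, α)) (hα hx)
  | nu y φ ih =>
    intro ι _ _ e he
    obtain ⟨C, hC⟩ := ih
      (fun i => Function.update (e i) y (M.interp (.nu y φ) (e i)))
      (fun i j hij => update_le_update_iff.2
        ⟨M.interp_mono _ (he hij), fun z _ => he hij z⟩)
    refine ⟨C, fun w => (hC.length_le w).trans (Nat.le_add_right _ 2), hC.succ,
      fun N π h i x hx => ?_⟩
    refine Set.mem_sUnion.2 ⟨π ⁻¹' M.interp (.nu y φ) (e i), fun z hz => ?_, hx⟩
    have hz' := hC.preserves N π h i z (M.subset_interp_nu y φ (e i) hz)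
    rwa [preimage_update] at hz'

/-- `M.IsPath w l`: the list `w :: l` is a path of `M` from the root to `w`, in reverse order. -/
inductive IsPath (M : Model) : M.W → List M.W → Prop
  | root : IsPath M M.root []
  | step {v w : M.W} {l : List M.W} : IsPath M v l → M.R v w → IsPath M w (v :: l)

/-- The tree unravelling of a model. -/
def unravel (M : Model) : Model where
  W := {p : M.W × List M.W // M.IsPath p.1 p.2}
  root := ⟨(M.root, []), .root⟩
  R p q := q.1.2 = p.1.1 :: p.1.2
  val p := M.val p.1.1

theorem R_of_unravel_R {M : Model} {p q : M.unravel.W} (h : M.unravel.R p q) :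
    M.R p.1.1 q.1.1 := by
  obtain ⟨⟨w, l⟩, hq⟩ := q
  change l = _ at h
  subst h
  cases hq
  assumption

theorem stepsTo_unravel {M : Model} {k : ℕ} {p : M.unravel.W} :
    M.unravel.stepsTo k p ↔ p.1.2.length = k := by
  constructor
  · intro h
    induction k generalizing p with
    | zero => cases h; rfl
    | succ k ih =>
      obtain ⟨q, hq, hqp⟩ := h
      change p.1.2 = _ at hqp
      rw [hqp, List.length_cons, ih hq]
  · obtain ⟨⟨w, l⟩, hp⟩ := p
    dsimp only at hp
    intro h
    induction hp generalizing k with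
    | root => cases h; rfl
    | step hp hR ih =>
      cases h
      exact ⟨_, ih rfl, rfl⟩

theorem unravel_mem_treeC {M : Model} {d : ℕ} {kids : M.W → List M.W}
    (hd : ∀ w, (kids w).length ≤ d) (hR : ∀ w v, M.R w v → v ∈ kids w) :
    M.unravel ∈ TreeC d := by
  refine ⟨⟨?_, ?_, ?_⟩, ?_⟩
  · rintro ⟨⟨w, l⟩, hp⟩
    dsimp only at hp
    induction hp with
    | root => exact .refl
    | step hp hR ih => exact ih.tail rfl
  · intro p hp
    exact List.cons_ne_nil _ _ hp.symm
  · intro p q q' hq hq'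
    have h := hq.symm.trans hq'
    exact Subtype.ext (Prod.ext (List.cons.inj h).1 (List.cons.inj h).2)
  · rintro p ⟨f, hf, hfp⟩
    classical
    have hinj : Function.Injective fun i => (f i).1.1 := fun i j hij =>
      hf (Subtype.ext (Prod.ext hij ((hfp i).trans (hfp j).symm)))
    have hcard : (Finset.univ.image fun i => (f i).1.1).card ≤ (kids p.1.1).toFinset.card := by
      refine Finset.card_le_card fun v hv => ?_
      obtain ⟨i, -, rfl⟩ := Finset.mem_image.1 hv
      exact List.mem_toFinset.2 (hR _ _ (R_of_unravel_R (hfp i)))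
    rw [Finset.card_image_of_injective _ hinj, Finset.card_univ, Fintype.card_fin] at hcard
    have := List.toFinset_card_le (kids p.1.1)
    have := hd p.1.1
    omega

/-- If `K` follows a strategy for `φ` on points satisfying an invariant, then its unravelling
satisfies `φ`. -/
theorem sat_unravel {M K : Model} {φ : Form} (hM : M.Sat φ) {C : M.W → List M.W}
    (hC : M.IsStrategy φ (fun (_ : PUnit.{2}) _ => ∅) C) (π : K.W → M.W) (Inv : K.W → Prop)
    (hroot : Inv K.root) (hstep : ∀ q r, Inv q → K.R q r → Inv r) (hπ : π K.root = M.root)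
    (hval : ∀ q p, K.val q p ↔ M.val (π q) p)
    (hforth : ∀ q r, Inv q → K.R q r → M.R (π q) (π r))
    (hcover : ∀ q, ∀ v ∈ C (π q), ∃ r, K.R q r ∧ π r = v) : K.unravel.Sat φ := by
  have hInv : ∀ q l, K.IsPath q l → Inv q := by
    intro q l h
    induction h with
    | root => exact hroot
    | step _ hR ih => exact hstep _ _ ih hR
  have hF : Follows K.unravel M C fun p => π p.1.1 := by
    refine ⟨fun p => hval p.1.1, fun p q h => ?_, fun p v hv => ?_⟩
    · exact hforth _ _ (hInv _ _ p.2) (R_of_unravel_R h)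
    · obtain ⟨r, hr, hrv⟩ := hcover _ v hv
      exact ⟨⟨(r, p.1.1 :: p.1.2), .step p.2 hr⟩, rfl, hrv⟩
  refine hC.preserves K.unravel _ hF PUnit.unit K.unravel.root ?_
  change π K.root ∈ _
  rw [hπ]
  exact hM

theorem IsPath.transfer {K : Model} {R' : K.W → K.W → Prop} {val' : K.W → ℕ → Prop}
    {n : ℕ} (lvl : K.W → ℕ) (h₀ : lvl K.root = 0) (hR : ∀ q r, K.R q r → lvl r = lvl q + 1)
    (hRR' : ∀ q r, lvl q < n → K.R q r → R' q r) {q : K.W} {l : List K.W}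
    (h : K.IsPath q l) (hl : l.length ≤ n) :
    lvl q = l.length ∧ IsPath ⟨K.W, K.root, R', val'⟩ q l := by
  induction h with
  | root => exact ⟨h₀, .root⟩
  | @step v w l hp hvw ih =>
    obtain ⟨hv, hp'⟩ := ih ((Nat.le_succ _).trans hl)
    refine ⟨?_, .step hp' (hRR' v w ?_ hvw)⟩
    · rw [hR v w hvw, hv, List.length_cons]
    · rw [hv]; exact hl

/-- Two models on the same points which have the same transitions below level `n` and the same
`σ`-labels up to level `n` have `(σ,n)`-isomorphic unravellings. -/
theorem nIsoEq_unravel {Q : Type} {q₀ : Q} {R R' : Q → Q → Prop} {val val' : Q → ℕ → Prop}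
    {σ : Set ℕ} {n : ℕ} (lvl : Q → ℕ) (h₀ : lvl q₀ = 0)
    (hR : ∀ q r, R q r → lvl r = lvl q + 1) (hR' : ∀ q r, R' q r → lvl r = lvl q + 1)
    (hRR' : ∀ q r, lvl q < n → (R q r ↔ R' q r)) (Inv : Q → Prop) (hroot : Inv q₀)
    (hstep : ∀ q r, Inv q → R q r → Inv r)
    (hval : ∀ q, Inv q → lvl q ≤ n → ∀ p ∈ σ, (val q p ↔ val' q p)) :
    NIsoEq (unravel ⟨Q, q₀, R, val⟩) (unravel ⟨Q, q₀, R', val'⟩) σ n := by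
  have hInv : ∀ q l, IsPath ⟨Q, q₀, R, val⟩ q l → Inv q := by
    intro q l h
    induction h with
    | root => exact hroot
    | step _ hR ih => exact hstep _ _ ih hR
  have toRight : ∀ {q : Q} {l : List Q}, IsPath ⟨Q, q₀, R, val⟩ q l → l.length ≤ n →
      lvl q = l.length ∧ IsPath ⟨Q, q₀, R', val'⟩ q l := fun h hl =>
    IsPath.transfer (K := ⟨Q, q₀, R, val⟩) lvl h₀ hR (fun q r hq => (hRR' q r hq).1) h hl
  have toLeft : ∀ {q : Q} {l : List Q}, IsPath ⟨Q, q₀, R', val'⟩ q l → l.length ≤ n →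
      lvl q = l.length ∧ IsPath ⟨Q, q₀, R, val⟩ q l := fun h hl =>
    IsPath.transfer (K := ⟨Q, q₀, R', val'⟩) lvl h₀ hR' (fun q r hq => (hRR' q r hq).2) h hl
  refine ⟨fun p p' => p.1 = p'.1 ∧ p.1.2.length ≤ n, ⟨⟨rfl, Nat.zero_le _⟩, ?_, ?_, ?_, ?_⟩,
    ?_, ?_, ?_, ?_⟩
  · rintro p p' ⟨h, hn⟩
    exact ⟨_, hn, stepsTo_unravel.2 rfl, stepsTo_unravel.2 (by rw [h])⟩
  · rintro p p' ⟨h, hn⟩ s hs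
    change val p.1.1 s ↔ val' p'.1.1 s
    rw [← h]
    exact hval _ (hInv _ _ p.2) ((toRight p.2 hn).1.trans_le hn) s hs
  · rintro p p' ⟨h, hn⟩ k hk hp q hpq
    have hlen : q.1.2.length ≤ n := by
      change q.1.2 = _ at hpq
      rw [hpq, List.length_cons, stepsTo_unravel.1 hp]
      exact hk
    exact ⟨⟨q.1, (toRight q.2 hlen).2⟩, hpq.trans (by rw [h]), rfl, hlen⟩
  · rintro p p' ⟨h, hn⟩ k hk hp q hpq
    have hlen : q.1.2.length ≤ n := by
      change q.1.2 = _ at hpq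
      rw [hpq, List.length_cons, stepsTo_unravel.1 hp]
      exact hk
    exact ⟨⟨q.1, (toLeft q.2 hlen).2⟩, hpq.trans (by rw [h]), rfl, hlen⟩
  · rintro p q q' ⟨h, -⟩ ⟨h', -⟩
    exact Subtype.ext (h.symm.trans h')
  · rintro p p' q ⟨h, -⟩ ⟨h', -⟩
    exact Subtype.ext (h.trans h'.symm)
  · rintro p ⟨k, hk, hp⟩
    have hlen := (stepsTo_unravel.1 hp).trans_le hk
    exact ⟨⟨p.1, (toRight p.2 hlen).2⟩, rfl, hlen⟩
  · rintro p ⟨k, hk, hp⟩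
    have hlen := (stepsTo_unravel.1 hp).trans_le hk
    exact ⟨⟨p.1, (toLeft p.2 hlen).2⟩, rfl, hlen⟩

end Model

open Model in
/-- Two strategies for models linked by a `(σ,n)`-bisimulation can be played jointly, giving
`(σ,n)`-isomorphic trees of bounded outdegree. -/
theorem exists_nIsoEq_trees {φ φ' : Form} {σ : Set ℕ} {n : ℕ} {M M' : Model} (hM : M.Sat φ)
    (hM' : M'.Sat φ') (h : NBisimEq M M' σ n) :
    ∃ N ∈ TreeC (φ.size + φ'.size), ∃ N' ∈ TreeC (φ.size + φ'.size),
      N.Sat φ ∧ N'.Sat φ' ∧ NIsoEq N N' σ n := by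
  obtain ⟨Z, hZ⟩ := h
  obtain ⟨C, hC⟩ := M.exists_isStrategy φ (fun (_ : PUnit.{2}) _ => ∅) monotone_const
  obtain ⟨C', hC'⟩ := M'.exists_isStrategy φ' (fun (_ : PUnit.{2}) _ => ∅) monotone_const
  let Q := ℕ × M.W × M'.W
  let Inv : Q → Prop := fun q =>
    q.1 ≤ n → Z q.2.1 q.2.2 ∧ M.stepsTo q.1 q.2.1 ∧ M'.stepsTo q.1 q.2.2
  have hf : ∀ (q : Q) (v : M.W), ∃ v', Inv q → q.1 < n → M.R q.2.1 v →
      M'.R q.2.2 v' ∧ Z v v' := by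
    intro q v
    by_cases hq : Inv q ∧ q.1 < n ∧ M.R q.2.1 v
    · obtain ⟨hI, hn, hv⟩ := hq
      obtain ⟨hz, hs, -⟩ := hI hn.le
      obtain ⟨v', hv'⟩ := hZ.forth hz _ hn hs v hv
      exact ⟨v', fun _ _ _ => hv'⟩
    · exact ⟨M'.root, fun h₁ h₂ h₃ => (hq ⟨h₁, h₂, h₃⟩).elim⟩
  have hg : ∀ (q : Q) (v' : M'.W), ∃ v, Inv q → q.1 < n → M'.R q.2.2 v' →
      M.R q.2.1 v ∧ Z v v' := by
    intro q v'
    by_cases hq : Inv q ∧ q.1 < n ∧ M'.R q.2.2 v'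
    · obtain ⟨hI, hn, hv⟩ := hq
      obtain ⟨hz, -, hs⟩ := hI hn.le
      obtain ⟨v, hv⟩ := hZ.back hz _ hn hs v' hv
      exact ⟨v, fun _ _ _ => hv⟩
    · exact ⟨M.root, fun h₁ h₂ h₃ => (hq ⟨h₁, h₂, h₃⟩).elim⟩
  choose f hf using hf
  choose g hg using hg
  let both : Q → List Q := fun q =>
    (C q.2.1).map (fun v => (q.1 + 1, v, f q v)) ++
      (C' q.2.2).map (fun v' => (q.1 + 1, g q v', v'))
  let kids : Q → List Q := fun q =>
    if q.1 < n then both q else (C q.2.1).map fun v => (q.1 + 1, v, q.2.2)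
  let kids' : Q → List Q := fun q =>
    if q.1 < n then both q else (C' q.2.2).map fun v' => (q.1 + 1, q.2.1, v')
  have mem_both : ∀ q r, r ∈ both q → r.1 = q.1 + 1 ∧ (Inv q → q.1 < n →
      M.R q.2.1 r.2.1 ∧ M'.R q.2.2 r.2.2 ∧ Z r.2.1 r.2.2) := by
    intro q r hr
    rcases List.mem_append.1 hr with hr | hr
    · obtain ⟨v, hv, rfl⟩ := List.mem_map.1 hr
      have hv := hC.succ _ _ hv
      exact ⟨rfl, fun hI hn => ⟨hv, hf q v hI hn hv⟩⟩
    · obtain ⟨v, hv, rfl⟩ := List.mem_map.1 hr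
      have hv := hC'.succ _ _ hv
      exact ⟨rfl, fun hI hn => ⟨(hg q v hI hn hv).1, hv, (hg q v hI hn hv).2⟩⟩
  have lvl : ∀ q r, r ∈ kids q → r.1 = q.1 + 1 := by
    intro q r hr
    by_cases hn : q.1 < n
    · exact (mem_both q r (by simpa only [kids, if_pos hn] using hr)).1
    · simp only [kids, if_neg hn] at hr
      obtain ⟨v, -, rfl⟩ := List.mem_map.1 hr
      rfl
  have lvl' : ∀ q r, r ∈ kids' q → r.1 = q.1 + 1 := by
    intro q r hr
    by_cases hn : q.1 < n
    · exact (mem_both q r (by simpa only [kids', if_pos hn] using hr)).1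
    · simp only [kids', if_neg hn] at hr
      obtain ⟨v, -, rfl⟩ := List.mem_map.1 hr
      rfl
  have hroot : Inv (0, M.root, M'.root) := fun _ => ⟨hZ.root, rfl, rfl⟩
  have inv_both : ∀ q r, q.1 < n → Inv q → r ∈ both q → Inv r := by
    intro q r hn hI hr _
    obtain ⟨hr₁, hr₂⟩ := mem_both q r hr
    obtain ⟨hR, hR', hz⟩ := hr₂ hI hn
    obtain ⟨-, hs, hs'⟩ := hI hn.le
    rw [hr₁]
    exact ⟨hz, ⟨_, hs, hR⟩, ⟨_, hs', hR'⟩⟩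
  have hstep : ∀ q r, Inv q → r ∈ kids q → Inv r := by
    intro q r hI hr
    by_cases hn : q.1 < n
    · exact inv_both q r hn hI (by simpa only [kids, if_pos hn] using hr)
    · have := lvl q r hr
      intro h
      omega
  have hstep' : ∀ q r, Inv q → r ∈ kids' q → Inv r := by
    intro q r hI hr
    by_cases hn : q.1 < n
    · exact inv_both q r hn hI (by simpa only [kids', if_pos hn] using hr)
    · have := lvl' q r hr
      intro h
      omega
  have len_both : ∀ q, (both q).length ≤ φ.size + φ'.size := by
    intro q
    simp only [both, List.length_append, List.length_map]
    exact Nat.add_le_add (hC.length_le _) (hC'.length_le _)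
  let K : Model := ⟨Q, (0, M.root, M'.root), fun q r => r ∈ kids q, fun q => M.val q.2.1⟩
  let K' : Model := ⟨Q, (0, M.root, M'.root), fun q r => r ∈ kids' q, fun q => M'.val q.2.2⟩
  refine ⟨K.unravel, unravel_mem_treeC (M := K) (kids := kids) (fun q => ?_) (fun _ _ h => h),
    K'.unravel, unravel_mem_treeC (M := K') (kids := kids') (fun q => ?_) (fun _ _ h => h),
    sat_unravel (K := K) hM hC (fun q => q.2.1) Inv hroot hstep rfl (fun _ _ => Iff.rfl) ?_ ?_,
    sat_unravel (K := K') hM' hC' (fun q => q.2.2) Inv hroot hstep' rfl (fun _ _ => Iff.rfl)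
      ?_ ?_,
    nIsoEq_unravel (fun q : Q => q.1) rfl lvl lvl' ?_ Inv hroot hstep ?_⟩
  · by_cases hn : q.1 < n
    · simp only [kids, if_pos hn]
      exact len_both q
    · simp only [kids, if_neg hn, List.length_map]
      exact (hC.length_le _).trans (Nat.le_add_right _ _)
  · by_cases hn : q.1 < n
    · simp only [kids', if_pos hn]
      exact len_both q
    · simp only [kids', if_neg hn, List.length_map]
      exact (hC'.length_le _).trans (Nat.le_add_left _ _)
  · intro q r hI hr
    change r ∈ kids q at hr
    by_cases hn : q.1 < n
    · simp only [kids, if_pos hn] at hr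
      exact ((mem_both q r hr).2 hI hn).1
    · simp only [kids, if_neg hn] at hr
      obtain ⟨v, hv, rfl⟩ := List.mem_map.1 hr
      exact hC.succ _ _ hv
  · intro q v hv
    by_cases hn : q.1 < n
    · refine ⟨(q.1 + 1, v, f q v), ?_, rfl⟩
      change _ ∈ kids q
      simp only [kids, if_pos hn]
      exact List.mem_append_left _ (List.mem_map.2 ⟨v, hv, rfl⟩)
    · refine ⟨(q.1 + 1, v, q.2.2), ?_, rfl⟩
      change _ ∈ kids q
      simp only [kids, if_neg hn]
      exact List.mem_map.2 ⟨v, hv, rfl⟩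
  · intro q r hI hr
    change r ∈ kids' q at hr
    by_cases hn : q.1 < n
    · simp only [kids', if_pos hn] at hr
      exact ((mem_both q r hr).2 hI hn).2.1
    · simp only [kids', if_neg hn] at hr
      obtain ⟨v, hv, rfl⟩ := List.mem_map.1 hr
      exact hC'.succ _ _ hv
  · intro q v hv
    by_cases hn : q.1 < n
    · refine ⟨(q.1 + 1, g q v, v), ?_, rfl⟩
      change _ ∈ kids' q
      simp only [kids', if_pos hn]
      exact List.mem_append_right _ (List.mem_map.2 ⟨v, hv, rfl⟩)
    · refine ⟨(q.1 + 1, q.2.1, v), ?_, rfl⟩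
      change _ ∈ kids' q
      simp only [kids', if_neg hn]
      exact List.mem_map.2 ⟨v, hv, rfl⟩
  · intro q r hn
    simp only [kids, kids', if_pos hn]
  · intro q hI hn
    exact hZ.base (hI hn).1

/-- joint `≈ⁿ_σ`-consistency over all models coincides with joint
`≅ⁿ_σ`-consistency over `T^d` for `d = |φ| + |φ'|`. -/
theorem stmt_3 (φ φ' : Form) (σ : Set ℕ) (hσ : σ.Finite)
    (h1 : φ.sig ⊆ σ) (h2 : φ'.sig ⊆ σ) (n : ℕ) :
    (∃ M M' : Model, M.Sat φ ∧ M'.Sat φ' ∧ NBisimEq M M' σ n) ↔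
    (∃ M ∈ TreeC (φ.size + φ'.size), ∃ M' ∈ TreeC (φ.size + φ'.size),
        M.Sat φ ∧ M'.Sat φ' ∧ NIsoEq M M' σ n) := by
  constructor
  · rintro ⟨M, M', hM, hM', h⟩
    exact exists_nIsoEq_trees hM hM' h
  · rintro ⟨M, -, M', -, hM, hM', Z, hZ, -⟩
    exact ⟨M, M', hM, hM', Z, hZ⟩
end

section
/- Let C be either the class of all models or T^2, let A be a nondeterministic parity tree automaton over C (assumed duplication safe in case C = T^2), and let n ∈ ℕ. Then there exists an ML-formula ψ of modal depth at most n such that for every tree M ∈ C: M ⊨ ψ if and only if there exists N ∈ C with N ⊨ A and M ≈^n N. Consequently ψ is an ML^n-uniform consequence of A over C; moreover ψ can be constructed in time |A|^{O(n·|A|)} when C is the class of all models and in time 2^{O(n·|A|)} when C = T^2. -/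
/-- Nondeterministic parity tree automata (NPTA) with alphabet `2^σ`. -/
structure NPTA (σ : Set ℕ) : Type 1 where
  Q : Type
  fin : Fintype Q
  qI : Q
  δ : Q → Set ℕ → Set (List Q)
  rank : Q → ℕ

/-- The number of states of an automaton. -/
def NPTA.card {σ : Set ℕ} (A : NPTA σ) : ℕ := @Fintype.card A.Q A.fin

/-- A run of `A` on `M`: the root gets the initial state, and at every point the
tuple of states of the children is a legal transition for the point's `σ`-letter. -/
def IsRun {σ : Set ℕ} (A : NPTA σ) (M : Model) (ρ : M.W → A.Q) : Prop :=
  ρ M.root = A.qI ∧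
  ∀ w : M.W, ∃ l : List M.W, l.Nodup ∧ (∀ v, v ∈ l ↔ M.R w v) ∧
    l.map ρ ∈ A.δ (ρ w) (σ ∩ {p | M.val w p})

/-- The parity condition: the largest priority occurring infinitely often is even. -/
def ParityGood (r : ℕ → ℕ) : Prop :=
  ∃ m, Even m ∧ (∀ N, ∃ i, N ≤ i ∧ r i = m) ∧ (∀ k, m < k → ∃ N, ∀ i, N ≤ i → r i ≠ k)

/-- Accepting runs: every infinite path satisfies the parity condition. -/
def IsAccRun {σ : Set ℕ} (A : NPTA σ) (M : Model) (ρ : M.W → A.Q) : Prop :=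
  IsRun A M ρ ∧
  ∀ π : ℕ → M.W, (∀ i, M.R (π i) (π (i+1))) → ParityGood fun i => A.rank (ρ (π i))

/-- `M ⊨ A`: `A` has an accepting run on `M`. -/
def SatA {σ : Set ℕ} (M : Model) (A : NPTA σ) : Prop := ∃ ρ, IsAccRun A M ρ

/-- Duplication safety: every singleton transition may be duplicated. -/
def DupSafe {σ : Set ℕ} (A : NPTA σ) : Prop :=
  ∀ q c p, [p] ∈ A.δ q c → [p, p] ∈ A.δ q c

/-- Nondeterministic parity tree automata for trees of unbounded outdegree:
transitions are sets of sets of states. -/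
structure NPTAU (σ : Set ℕ) : Type 1 where
  Q : Type
  fin : Fintype Q
  qI : Q
  δ : Q → Set ℕ → Set (Set Q)
  rank : Q → ℕ

def NPTAU.card {σ : Set ℕ} (A : NPTAU σ) : ℕ := @Fintype.card A.Q A.fin

/-- A run of an unbounded-branching automaton on `M`. -/
def IsRunU {σ : Set ℕ} (A : NPTAU σ) (M : Model) (ρ : M.W → A.Q) : Prop :=
  ρ M.root = A.qI ∧
  ∀ w : M.W, (ρ '' {v | M.R w v}) ∈ A.δ (ρ w) (σ ∩ {p | M.val w p})

def IsAccRunU {σ : Set ℕ} (A : NPTAU σ) (M : Model) (ρ : M.W → A.Q) : Prop :=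
  IsRunU A M ρ ∧
  ∀ π : ℕ → M.W, (∀ i, M.R (π i) (π (i+1))) → ParityGood fun i => A.rank (ρ (π i))

/-- `M ⊨ A` for unbounded-branching automata. -/
def SatU {σ : Set ℕ} (M : Model) (A : NPTAU σ) : Prop := ∃ ρ, IsAccRunU A M ρ

/-! ### Bounded bisimilarity between points -/

/-- Points `w` and `v` are bisimilar up to depth `n`, over the full signature. -/
def BisimUpTo (M N : Model) : ℕ → M.W → N.W → Prop
  | 0, w, v => ∀ p, M.val w p ↔ N.val v p
  | n + 1, w, v => (∀ p, M.val w p ↔ N.val v p) ∧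
      (∀ w', M.R w w' → ∃ v', N.R v v' ∧ BisimUpTo M N n w' v') ∧
      (∀ v', N.R v v' → ∃ w', M.R w w' ∧ BisimUpTo M N n w' v')

namespace BisimUpTo

lemma val_iff {M N : Model} {n : ℕ} {w : M.W} {v : N.W} (h : BisimUpTo M N n w v) (p : ℕ) :
    M.val w p ↔ N.val v p := by
  cases n with
  | zero => exact h p
  | succ n => exact h.1 p

protected lemma refl (M : Model) (n : ℕ) (w : M.W) : BisimUpTo M M n w w := by
  induction n generalizing w with
  | zero => exact fun p => Iff.rfl
  | succ n ih =>
    exact ⟨fun p => Iff.rfl, fun v hv => ⟨v, hv, ih v⟩, fun v hv => ⟨v, hv, ih v⟩⟩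

/-- Modal formulae of depth at most `n` are invariant under bisimilarity up to depth `n`. -/
lemma mem_interp_iff {M N : Model} {φ : Form} (hφ : φ.IsML) {n : ℕ} (hd : φ.depth ≤ n)
    {w : M.W} {v : N.W} (h : BisimUpTo M N n w v) (e : ℕ → Set M.W) (e' : ℕ → Set N.W) :
    w ∈ M.interp φ e ↔ v ∈ N.interp φ e' := by
  induction φ generalizing n w v with
  | pos p => exact h.val_iff p
  | neg p => exact not_congr (h.val_iff p)
  | or φ ψ ihφ ihψ =>
    simp only [Form.depth, max_le_iff] at hd
    exact or_congr (ihφ hφ.1 hd.1 h) (ihψ hφ.2 hd.2 h)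
  | and φ ψ ihφ ihψ =>
    simp only [Form.depth, max_le_iff] at hd
    exact and_congr (ihφ hφ.1 hd.1 h) (ihψ hφ.2 hd.2 h)
  | dia φ ih =>
    obtain _ | n := n
    · simp [Form.depth] at hd
    have hd' : φ.depth ≤ n := by simpa [Form.depth] using hd
    obtain ⟨-, forth, back⟩ := h
    constructor
    · rintro ⟨w', hw', hs⟩
      obtain ⟨v', hv', hb⟩ := forth w' hw'
      exact ⟨v', hv', (ih hφ hd' hb).1 hs⟩
    · rintro ⟨v', hv', hs⟩
      obtain ⟨w', hw', hb⟩ := back v' hv'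
      exact ⟨w', hw', (ih hφ hd' hb).2 hs⟩
  | box φ ih =>
    obtain _ | n := n
    · simp [Form.depth] at hd
    have hd' : φ.depth ≤ n := by simpa [Form.depth] using hd
    obtain ⟨-, forth, back⟩ := h
    constructor
    · intro hs v' hv'
      obtain ⟨w', hw', hb⟩ := back v' hv'
      exact (ih hφ hd' hb).1 (hs w' hw')
    · intro hs w' hw'
      obtain ⟨v', hv', hb⟩ := forth w' hw'
      exact (ih hφ hd' hb).2 (hs v' hv')
  | var x => exact hφ.elim
  | mu x φ ih => exact hφ.elim
  | nu x φ ih => exact hφ.elim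

/-- Embeddings onto generated submodels preserve bounded bisimilarity. -/
lemma map_iff {M N N' : Model} (g : N.W → N'.W) (hval : ∀ x p, N.val x p ↔ N'.val (g x) p)
    (hR : ∀ x y, N'.R (g x) y ↔ ∃ x', y = g x' ∧ N.R x x') (n : ℕ) (w : M.W) (x : N.W) :
    BisimUpTo M N' n w (g x) ↔ BisimUpTo M N n w x := by
  induction n generalizing w x with
  | zero => exact forall_congr' fun p => by rw [hval]
  | succ n ih =>
    refine and_congr (forall_congr' fun p => by rw [hval]) (and_congr ?_ ?_)
    · refine forall₂_congr fun w' _ => ?_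
      simp only [hR]
      constructor
      · rintro ⟨_, ⟨x', rfl, hx'⟩, hb⟩
        exact ⟨x', hx', (ih _ _).1 hb⟩
      · rintro ⟨x', hx', hb⟩
        exact ⟨_, ⟨x', rfl, hx'⟩, (ih _ _).2 hb⟩
    · simp only [hR]
      constructor
      · intro h x' hx'
        obtain ⟨w', hw', hb⟩ := h _ ⟨x', rfl, hx'⟩
        exact ⟨w', hw', (ih _ _).1 hb⟩
      · rintro h _ ⟨x', rfl, hx'⟩
        obtain ⟨w', hw', hb⟩ := h _ hx'
        exact ⟨w', hw', (ih _ _).2 hb⟩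

end BisimUpTo

lemma Model.IsTree.stepsTo_unique {M : Model} (hM : M.IsTree) {k k' : ℕ} {w : M.W}
    (h : M.stepsTo k w) (h' : M.stepsTo k' w) : k = k' := by
  induction k generalizing k' w with
  | zero =>
    cases k' with
    | zero => rfl
    | succ k' =>
      obtain ⟨v, -, hv⟩ := h'
      cases h
      exact (hM.2.1 v hv).elim
  | succ k ih =>
    obtain ⟨v, hkv, hv⟩ := h
    cases k' with
    | zero =>
      cases h'
      exact (hM.2.1 v hv).elim
    | succ k' =>
      obtain ⟨v', hkv', hv'⟩ := h'
      cases hM.2.2 _ _ _ hv hv'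
      rw [ih hkv hkv']

lemma nBisimEq_iff_bisimUpTo {M N : Model} (hM : M.IsTree) (hN : N.IsTree) (n : ℕ) :
    NBisimEq M N Set.univ n ↔ BisimUpTo M N n M.root N.root := by
  constructor
  · rintro ⟨Z, hZ⟩
    suffices H : ∀ j k w v, k + j = n → M.stepsTo k w → N.stepsTo k v → Z w v →
        BisimUpTo M N j w v from H n 0 _ _ (zero_add n) rfl rfl hZ.root
    intro j
    induction j with
    | zero => exact fun k w v _ _ _ h p => hZ.base h p trivial
    | succ j ih =>
      intro k w v hk hw hv h
      refine ⟨fun p => hZ.base h p trivial, fun w' hw' => ?_, fun v' hv' => ?_⟩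
      · obtain ⟨v', hv', hz⟩ := hZ.forth h k (by omega) hw w' hw'
        exact ⟨v', hv', ih (k + 1) _ _ (by omega) ⟨w, hw, hw'⟩ ⟨v, hv, hv'⟩ hz⟩
      · obtain ⟨w', hw', hz⟩ := hZ.back h k (by omega) hv v' hv'
        exact ⟨w', hw', ih (k + 1) _ _ (by omega) ⟨w, hw, hw'⟩ ⟨v, hv, hv'⟩ hz⟩
  · intro h
    refine ⟨fun w v => ∃ k j, k + j = n ∧ M.stepsTo k w ∧ N.stepsTo k v ∧ BisimUpTo M N j w v,
      ⟨0, n, zero_add n, rfl, rfl, h⟩, ?_, ?_, ?_, ?_⟩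
    · rintro w v ⟨k, j, hk, hw, hv, -⟩
      exact ⟨k, by omega, hw, hv⟩
    · rintro w v ⟨k, j, hk, hw, hv, hb⟩ p -
      exact hb.val_iff p
    · rintro w v ⟨k, j, hk, hw, hv, hb⟩ k' hk' hw₂ w' hw'
      cases hM.stepsTo_unique hw hw₂
      obtain _ | j := j
      · omega
      obtain ⟨v', hv', hb'⟩ := hb.2.1 w' hw'
      exact ⟨v', hv', k + 1, j, by omega, ⟨w, hw, hw'⟩, ⟨v, hv, hv'⟩, hb'⟩
    · rintro w v ⟨k, j, hk, hw, hv, hb⟩ k' hk' hv₂ v' hv'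
      cases hN.stepsTo_unique hv hv₂
      obtain _ | j := j
      · omega
      obtain ⟨w', hw', hbis⟩ := hb.2.2 v' hv'
      exact ⟨w', hw', k + 1, j, by omega, ⟨w, hw, hw'⟩, ⟨v, hv, hv'⟩, hbis⟩

/-! ### Subtrees and joins of trees -/

namespace Model

/-- The submodel generated by the point `u`. -/
abbrev subtree (M : Model) (u : M.W) : Model where
  W := {v // Relation.ReflTransGen M.R u v}
  root := ⟨u, .refl⟩
  R v v' := M.R v.1 v'.1
  val v p := M.val v.1 p

lemma IsTree.not_rel_of_reflTransGen {M : Model} (hM : M.IsTree) {u w : M.W}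
    (h : Relation.ReflTransGen M.R u w) : ¬ M.R w u := by
  have key : ∀ {a b : M.W} {k : ℕ}, M.stepsTo k a → Relation.ReflTransGen M.R a b →
      ∃ j, k ≤ j ∧ M.stepsTo j b := by
    intro a b k hk hab
    induction hab with
    | refl => exact ⟨k, le_rfl, hk⟩
    | tail _ hbc ih =>
      obtain ⟨j, hj, hs⟩ := ih
      exact ⟨j + 1, by omega, _, hs, hbc⟩
  intro hwu
  obtain ⟨k, -, hk⟩ := key (k := 0) rfl (hM.1 u)
  obtain ⟨j, hj, hs⟩ := key hk h
  have := hM.stepsTo_unique hk (k' := j + 1) ⟨w, hs, hwu⟩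
  omega

lemma IsTree.subtree {M : Model} (hM : M.IsTree) (u : M.W) : (M.subtree u).IsTree := by
  refine ⟨?_, fun w hw => hM.not_rel_of_reflTransGen w.2 hw,
    fun w v v' h h' => Subtype.ext (hM.2.2 _ _ _ h h')⟩
  rintro ⟨w, hw⟩
  induction hw with
  | refl => exact .refl
  | tail _ hbc ih => exact ih.tail hbc

lemma outdegLE.subtree {M : Model} {d : ℕ} (hM : M.outdegLE d) (u : M.W) :
    (M.subtree u).outdegLE d := by
  rintro w ⟨f, hf, hmem⟩
  exact hM w.1 ⟨fun i => (f i).1, Subtype.val_injective.comp hf, hmem⟩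

lemma bisimUpTo_subtree_iff (M N : Model) (u : N.W) (n : ℕ) (w : M.W) :
    BisimUpTo M (N.subtree u) n w (N.subtree u).root ↔ BisimUpTo M N n w u :=
  (BisimUpTo.map_iff (N := N.subtree u) (N' := N) Subtype.val (fun _ _ => Iff.rfl)
    (fun x y => ⟨fun h => ⟨⟨y, x.2.tail h⟩, rfl, h⟩, by rintro ⟨x', rfl, h⟩; exact h⟩)
    n w (N.subtree u).root).symm

/-- The accessibility relation of `Model.join`. -/
inductive JoinRel {I : Type} (f : I → Model) :
    Option (Σ i, (f i).W) → Option (Σ i, (f i).W) → Prop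
  | root (i : I) : JoinRel f none (some ⟨i, (f i).root⟩)
  | step (i : I) (x y : (f i).W) : (f i).R x y → JoinRel f (some ⟨i, x⟩) (some ⟨i, y⟩)

/-- A fresh root with valuation `c` whose children are the roots of the models `f i`. -/
abbrev join {I : Type} (c : ℕ → Prop) (f : I → Model) : Model where
  W := Option (Σ i, (f i).W)
  root := none
  R := JoinRel f
  val w := w.elim c fun x => (f x.1).val x.2

section Join

variable {I : Type} {c : ℕ → Prop} {f : I → Model}

lemma join_rel_none_iff {y : (join c f).W} :
    (join c f).R none y ↔ ∃ i, y = some ⟨i, (f i).root⟩ := by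
  constructor
  · rintro ⟨i⟩
    exact ⟨i, rfl⟩
  · rintro ⟨i, rfl⟩
    exact .root i

lemma join_rel_some_iff {i : I} {x : (f i).W} {y : (join c f).W} :
    (join c f).R (some ⟨i, x⟩) y ↔ ∃ x', y = some ⟨i, x'⟩ ∧ (f i).R x x' := by
  constructor
  · rintro (_ | ⟨_, _, y, h⟩)
    exact ⟨y, rfl, h⟩
  · rintro ⟨x', rfl, h⟩
    exact .step i x x' h

lemma join_isTree (hf : ∀ i, (f i).IsTree) : (join c f).IsTree := by
  refine ⟨?_, ?_, ?_⟩
  · rintro (_ | ⟨i, x⟩)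
    · exact .refl
    · induction (hf i).1 x with
      | refl => exact .single (.root i)
      | tail _ hbc ih => exact ih.tail (.step i _ _ hbc)
  · rintro w ⟨⟩
  · rintro w v v' (⟨i⟩ | ⟨i, x, y, h⟩) h'
    · generalize hy : (f i).root = y at h'
      cases h' with
      | root => rfl
      | step _ x _ h' => exact ((hf i).2.1 x (hy ▸ h')).elim
    · generalize hy : y = z at h'
      cases h' with
      | root => exact ((hf i).2.1 x (hy ▸ h)).elim
      | step _ x' _ h' => rw [(hf i).2.2 _ _ _ h (hy ▸ h')]

lemma join_outdegLE {d : ℕ} (hI : ∀ g : Fin (d + 1) → I, ¬ Function.Injective g)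
    (hf : ∀ i, (f i).outdegLE d) : (join c f).outdegLE d := by
  rintro (_ | ⟨i, x⟩) ⟨g, hg, hmem⟩
  · choose k hk using fun j => join_rel_none_iff.1 (hmem j)
    refine hI k fun a b hab => hg ?_
    rw [hk a, hk b, hab]
  · choose k hk hR using fun j => join_rel_some_iff.1 (hmem j)
    refine hf i x ⟨k, fun a b hab => hg ?_, hR⟩
    rw [hk a, hk b, hab]

lemma bisimUpTo_join_some_iff {M : Model} {n : ℕ} {w : M.W} {i : I} {x : (f i).W} :
    BisimUpTo M (join c f) n w (some ⟨i, x⟩) ↔ BisimUpTo M (f i) n w x :=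
  BisimUpTo.map_iff (N := f i) (N' := join c f) (fun x => some ⟨i, x⟩)
    (fun _ _ => Iff.rfl) (fun _ _ => join_rel_some_iff) n w x

lemma bisimUpTo_join_root {M : Model} {n : ℕ} {w : M.W}
    (forth : ∀ v, M.R w v → ∃ i, BisimUpTo M (f i) n v (f i).root)
    (back : ∀ i, ∃ v, M.R w v ∧ BisimUpTo M (f i) n v (f i).root) :
    BisimUpTo M (join (M.val w) f) (n + 1) w (join (M.val w) f).root := by
  refine ⟨fun p => Iff.rfl, fun v hv => ?_, fun y hy => ?_⟩
  · obtain ⟨i, hi⟩ := forth v hv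
    exact ⟨_, .root i, bisimUpTo_join_some_iff.2 hi⟩
  · obtain ⟨i, rfl⟩ := join_rel_none_iff.1 hy
    obtain ⟨v, hv, hb⟩ := back i
    exact ⟨v, hv, bisimUpTo_join_some_iff.2 hb⟩

/-- The labelling of a join by a root label and labellings of the components. -/
def joinLabel {Q : Type} (q : Q) (ρ : ∀ i, (f i).W → Q) : (join c f).W → Q :=
  fun w => Option.elim w q fun x => ρ x.1 x.2

end Join

end Model

lemma ParityGood.of_tail {r : ℕ → ℕ} (h : ParityGood fun i => r (i + 1)) : ParityGood r := by
  obtain ⟨m, hm, hinf, hfin⟩ := h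
  refine ⟨m, hm, fun N => ?_, fun k hk => ?_⟩
  · obtain ⟨i, hi, hr⟩ := hinf N
    exact ⟨i + 1, by omega, hr⟩
  · obtain ⟨N, hN⟩ := hfin k hk
    refine ⟨N + 1, fun i hi => ?_⟩
    obtain ⟨i, rfl⟩ : ∃ j, i = j + 1 := ⟨i - 1, by omega⟩
    exact hN i (by omega)

/-- Every infinite path satisfies the parity condition. -/
def PathsGood {Q : Type} (rank : Q → ℕ) (M : Model) (ρ : M.W → Q) : Prop :=
  ∀ π : ℕ → M.W, (∀ i, M.R (π i) (π (i + 1))) → ParityGood fun i => rank (ρ (π i))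

lemma PathsGood.subtree {Q : Type} {rank : Q → ℕ} {M : Model} {ρ : M.W → Q}
    (h : PathsGood rank M ρ) (u : M.W) :
    PathsGood rank (M.subtree u) fun x => ρ x.1 :=
  fun π hπ => h (fun i => (π i).1) hπ

lemma PathsGood.join {Q I : Type} {rank : Q → ℕ} {c : ℕ → Prop} {f : I → Model}
    {ρ : ∀ i, (f i).W → Q} (h : ∀ i, PathsGood rank (f i) (ρ i)) (q : Q) :
    PathsGood rank (Model.join c f) (Model.joinLabel q ρ) := by
  have key : ∀ π : ℕ → (Model.join c f).W, (∀ i, (Model.join c f).R (π i) (π (i + 1))) →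
      ∀ i x, π 0 = some ⟨i, x⟩ → ParityGood fun k => rank (Model.joinLabel q ρ (π k)) := by
    intro π hπ i x hx
    have hcomp : ∀ k, ∃ y : (f i).W, π k = some ⟨i, y⟩ := by
      intro k
      induction k with
      | zero => exact ⟨x, hx⟩
      | succ k ih =>
        obtain ⟨y, hy⟩ := ih
        have hk := hπ k
        rw [hy] at hk
        obtain ⟨z, hz, -⟩ := Model.join_rel_some_iff.1 hk
        exact ⟨z, hz⟩
    choose y hy using hcomp
    have := h i y fun k => by
      have hk := hπ k
      rw [hy k, hy (k + 1)] at hk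
      obtain ⟨z, hz, hR⟩ := Model.join_rel_some_iff.1 hk
      cases hz
      exact hR
    simpa only [hy, Model.joinLabel, Option.elim_some] using this
  intro π hπ
  rcases hx : π 0 with _ | ⟨i, x⟩
  · have h0 := hπ 0
    rw [hx] at h0
    obtain ⟨i, hi⟩ := Model.join_rel_none_iff.1 h0
    exact ParityGood.of_tail (key (fun k => π (k + 1)) (fun k => hπ (k + 1)) i _ hi)
  · exact key π hπ i x hx

/-! ### Finite conjunctions and disjunctions -/

namespace Form

/-- Disjunction of a list of formulae. -/
def bigOr : List Form → Form
  | [] => and (pos 0) (neg 0)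
  | φ :: l => or φ (bigOr l)

/-- Conjunction of a list of formulae. -/
def bigAnd : List Form → Form
  | [] => or (pos 0) (neg 0)
  | φ :: l => and φ (bigAnd l)

lemma mem_interp_bigOr {M : Model} {e : ℕ → Set M.W} {w : M.W} (l : List Form) :
    w ∈ M.interp (bigOr l) e ↔ ∃ φ ∈ l, w ∈ M.interp φ e := by
  induction l with
  | nil => simp [bigOr, Model.interp]
  | cons φ l ih => simp [bigOr, Model.interp, ih]

lemma mem_interp_bigAnd {M : Model} {e : ℕ → Set M.W} {w : M.W} (l : List Form) :
    w ∈ M.interp (bigAnd l) e ↔ ∀ φ ∈ l, w ∈ M.interp φ e := by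
  induction l with
  | nil => simp [bigAnd, Model.interp, em]
  | cons φ l ih => simp [bigAnd, Model.interp, ih]

lemma isML_bigOr {l : List Form} (h : ∀ φ ∈ l, φ.IsML) : (bigOr l).IsML := by
  induction l with
  | nil => simp [bigOr, IsML]
  | cons φ l ih => exact ⟨h _ (by simp), ih fun ψ hψ => h _ (by simp [hψ])⟩

lemma isML_bigAnd {l : List Form} (h : ∀ φ ∈ l, φ.IsML) : (bigAnd l).IsML := by
  induction l with
  | nil => simp [bigAnd, IsML]
  | cons φ l ih => exact ⟨h _ (by simp), ih fun ψ hψ => h _ (by simp [hψ])⟩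

lemma depth_bigOr_le {l : List Form} {n : ℕ} (h : ∀ φ ∈ l, φ.depth ≤ n) :
    (bigOr l).depth ≤ n := by
  induction l with
  | nil => simp [bigOr, depth]
  | cons φ l ih => exact max_le (h _ (by simp)) (ih fun ψ hψ => h _ (by simp [hψ]))

lemma depth_bigAnd_le {l : List Form} {n : ℕ} (h : ∀ φ ∈ l, φ.depth ≤ n) :
    (bigAnd l).depth ≤ n := by
  induction l with
  | nil => simp [bigAnd, depth]
  | cons φ l ih => exact max_le (h _ (by simp)) (ih fun ψ hψ => h _ (by simp [hψ]))

lemma size_bigOr_le {l : List Form} {b : ℕ} (h : ∀ φ ∈ l, φ.size ≤ b) :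
    (bigOr l).size ≤ 4 + l.length * (b + 1) := by
  induction l with
  | nil => simp [bigOr, size]
  | cons φ l ih =>
    have h₁ := h φ (by simp)
    have h₂ := ih fun ψ hψ => h _ (by simp [hψ])
    simp only [bigOr, size, List.length_cons, add_one_mul]
    omega

lemma size_bigAnd_le {l : List Form} {b : ℕ} (h : ∀ φ ∈ l, φ.size ≤ b) :
    (bigAnd l).size ≤ 4 + l.length * (b + 1) := by
  induction l with
  | nil => simp [bigAnd, size]
  | cons φ l ih =>
    have h₁ := h φ (by simp)
    have h₂ := ih fun ψ hψ => h _ (by simp [hψ])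
    simp only [bigAnd, size, List.length_cons, add_one_mul]
    omega

open Classical in
/-- The formula saying that exactly the propositions in `c` hold among those in `s`. -/
noncomputable def letter (s c : Finset ℕ) : Form :=
  bigAnd (s.toList.map fun p => if p ∈ c then pos p else neg p)

lemma mem_interp_letter {M : Model} {e : ℕ → Set M.W} {w : M.W} {s c : Finset ℕ} (hc : c ⊆ s) :
    w ∈ M.interp (letter s c) e ↔ (c : Set ℕ) = ↑s ∩ {p | M.val w p} := by
  simp only [letter, mem_interp_bigAnd, List.forall_mem_map, Finset.mem_toList, Set.ext_iff,
    Set.mem_inter_iff, Finset.mem_coe, Set.mem_ofPred_eq]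
  refine forall_congr' fun p => ?_
  by_cases hp : p ∈ c
  · simp [hp, hc hp, Model.interp]
  · simp [hp, Model.interp]

lemma isML_letter (s c : Finset ℕ) : (letter s c).IsML := by
  refine isML_bigAnd fun φ hφ => ?_
  obtain ⟨p, -, rfl⟩ := List.mem_map.1 hφ
  split_ifs <;> trivial

lemma depth_letter_le (s c : Finset ℕ) (n : ℕ) : (letter s c).depth ≤ n := by
  refine depth_bigAnd_le fun φ hφ => ?_
  obtain ⟨p, -, rfl⟩ := List.mem_map.1 hφ
  split_ifs <;> exact Nat.zero_le n

lemma size_letter_le (s c : Finset ℕ) : (letter s c).size ≤ 4 + s.card * 3 := by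
  refine (size_bigAnd_le (b := 2) fun φ hφ => ?_).trans (by simp)
  obtain ⟨p, -, rfl⟩ := List.mem_map.1 hφ
  split_ifs <;> simp [size]

end Form

/-! ### The uniform consequence -/

section Consequence

variable {Q : Type} [Fintype Q] (s : Finset ℕ) (T : Q → Set ℕ → Set (Finset Q))

open Classical in
/-- The depth `n` approximation of acceptance from a state, where `T` is the set of
transitions all of whose states are productive. -/
noncomputable def consequence : ℕ → Q → Form
  | 0, q => Form.bigOr
      ((s.powerset.filter fun c : Finset ℕ => ∃ S, S ∈ T q (c : Set ℕ)).toList.map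
        (Form.letter s))
  | n + 1, q => Form.bigOr
      (((s.powerset ×ˢ (Finset.univ : Finset (Finset Q))).filter
        fun x : Finset ℕ × Finset Q => x.2 ∈ T q (x.1 : Set ℕ)).toList.map fun x =>
          .and (Form.letter s x.1)
            (.and (Form.bigAnd (x.2.toList.map fun p => .dia (consequence n p)))
              (.box (Form.bigOr (x.2.toList.map (consequence n))))))

lemma isML_consequence (n : ℕ) (q : Q) : (consequence s T n q).IsML := by
  induction n generalizing q with
  | zero =>
    refine Form.isML_bigOr fun φ hφ => ?_
    obtain ⟨c, -, rfl⟩ := List.mem_map.1 hφ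
    exact Form.isML_letter s c
  | succ n ih =>
    refine Form.isML_bigOr fun φ hφ => ?_
    obtain ⟨x, -, rfl⟩ := List.mem_map.1 hφ
    refine ⟨Form.isML_letter s _, Form.isML_bigAnd fun φ hφ => ?_,
      Form.isML_bigOr fun φ hφ => ?_⟩
    · obtain ⟨p, -, rfl⟩ := List.mem_map.1 hφ
      exact ih p
    · obtain ⟨p, -, rfl⟩ := List.mem_map.1 hφ
      exact ih p

lemma depth_consequence_le (n : ℕ) (q : Q) : (consequence s T n q).depth ≤ n := by
  induction n generalizing q with
  | zero =>
    refine Form.depth_bigOr_le fun φ hφ => ?_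
    obtain ⟨c, -, rfl⟩ := List.mem_map.1 hφ
    exact Form.depth_letter_le s c 0
  | succ n ih =>
    refine Form.depth_bigOr_le fun φ hφ => ?_
    obtain ⟨x, -, rfl⟩ := List.mem_map.1 hφ
    refine max_le (Form.depth_letter_le s _ _) (max_le (Form.depth_bigAnd_le fun φ hφ => ?_)
      (Nat.succ_le_succ (Form.depth_bigOr_le fun φ hφ => ?_)))
    · obtain ⟨p, -, rfl⟩ := List.mem_map.1 hφ
      exact Nat.succ_le_succ (ih p)
    · obtain ⟨p, -, rfl⟩ := List.mem_map.1 hφ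
      exact ih p

lemma size_consequence_le [Nonempty Q] (n : ℕ) (q : Q) :
    (consequence s T n q).size ≤ 2 ^ (4 * (n + 1) * (Fintype.card Q + s.card + 1)) := by
  classical
  set k := s.card with hk
  set m := Fintype.card Q with hm
  have hm0 : 0 < m := Fintype.card_pos
  set X := 2 ^ (m + k + 1) with hX
  have hXlt : m + k + 1 < X := Nat.lt_two_pow_self
  have hX4 : 4 ≤ X := by
    calc 4 = 2 ^ 2 := rfl
      _ ≤ X := Nat.pow_le_pow_right (by norm_num) (by omega)
  have hpow : ∀ n, 2 ^ (4 * (n + 1) * (m + k + 1)) = X ^ (4 * (n + 1)) := fun n => by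
    rw [hX, ← pow_mul, mul_comm (m + k + 1)]
  rw [hpow]
  have hX2 : 16 ≤ X ^ 2 := by nlinarith
  induction n generalizing q with
  | zero =>
    refine (Form.size_bigOr_le (b := 4 + k * 3) fun φ hφ => ?_).trans ?_
    · obtain ⟨c, -, rfl⟩ := List.mem_map.1 hφ
      exact Form.size_letter_le s c
    · have hlen : (s.powerset.filter fun c : Finset ℕ => ∃ S, S ∈ T q (c : Set ℕ)).card ≤ X :=
        (Finset.card_filter_le _ _).trans (by
          rw [Finset.card_powerset]
          exact Nat.pow_le_pow_right (by norm_num) (by omega))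
      simp only [List.length_map, Finset.length_toList]
      calc _ ≤ 4 + X * (5 + X * 3) := by
            gcongr 4 + ?_ * ?_
            omega
        _ ≤ X ^ 2 * X ^ 2 := by nlinarith
        _ = _ := by ring
  | succ n ih =>
    set B := X ^ (4 * (n + 1)) with hB
    have hB1 : 1 ≤ B := Nat.one_le_pow _ _ (by omega)
    refine (Form.size_bigOr_le (b := 16 + k * 3 + m * (B + 2) + m * (B + 1))
      fun φ hφ => ?_).trans ?_
    · obtain ⟨⟨c, S⟩, -, rfl⟩ := List.mem_map.1 hφ
      have h₁ := Form.size_letter_le s c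
      have h₂ : (Form.bigAnd (S.toList.map fun p => .dia (consequence s T n p))).size ≤
          4 + m * (B + 2) := by
        refine (Form.size_bigAnd_le (b := B + 1) fun φ hφ => ?_).trans ?_
        · obtain ⟨p, -, rfl⟩ := List.mem_map.1 hφ
          exact Nat.succ_le_succ (ih p)
        · simp only [List.length_map, Finset.length_toList]
          gcongr
          exact S.card_le_univ
      have h₃ : (Form.bigOr (S.toList.map (consequence s T n))).size ≤ 4 + m * (B + 1) := by
        refine (Form.size_bigOr_le (b := B) fun φ hφ => ?_).trans ?_
        · obtain ⟨p, -, rfl⟩ := List.mem_map.1 hφ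
          exact ih p
        · simp only [List.length_map, Finset.length_toList]
          gcongr
          exact S.card_le_univ
      simp only [Form.size]
      omega
    · have hlen : ((s.powerset ×ˢ (Finset.univ : Finset (Finset Q))).filter
          fun x : Finset ℕ × Finset Q => x.2 ∈ T q (x.1 : Set ℕ)).card ≤ X :=
        (Finset.card_filter_le _ _).trans (by
          rw [Finset.card_product, Finset.card_powerset, Finset.card_univ, Fintype.card_finset,
            ← pow_add]
          exact Nat.pow_le_pow_right (by norm_num) (by omega))
      simp only [List.length_map, Finset.length_toList]
      have hb : 16 + k * 3 + m * (B + 2) + m * (B + 1) + 1 ≤ 16 * (X * B) - 4 := by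
        have h₁ : k * 3 + m * 3 ≤ 3 * X := by omega
        have h₂ : m * B ≤ X * B := Nat.mul_le_mul_right B (by omega)
        have h₃ : X ≤ X * B := Nat.le_mul_of_pos_right X hB1
        have h₄ : m * (B + 2) + m * (B + 1) = 2 * (m * B) + m * 3 := by ring
        omega
      have hXB : 4 ≤ 16 * (X * B) := by nlinarith
      calc _ ≤ 4 + X * (16 * (X * B) - 4) := by gcongr
        _ ≤ X * 4 + X * (16 * (X * B) - 4) := by omega
        _ = 16 * (X ^ 2 * B) := by
          rw [← mul_add, Nat.add_sub_cancel' hXB]; ring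
        _ ≤ X ^ 2 * (X ^ 2 * B) := by gcongr
        _ = _ := by rw [hB]; ring

variable {s T}

lemma mem_interp_consequence_zero {M : Model} {e : ℕ → Set M.W} {w : M.W} {q : Q} :
    w ∈ M.interp (consequence s T 0 q) e ↔ ∃ S, S ∈ T q (↑s ∩ {p | M.val w p}) := by
  classical
  simp only [consequence, Form.mem_interp_bigOr, List.mem_map, Finset.mem_toList,
    Finset.mem_filter, Finset.mem_powerset]
  constructor
  · rintro ⟨_, ⟨c, ⟨hc, hS⟩, rfl⟩, hw⟩
    rwa [← (Form.mem_interp_letter hc).1 hw]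
  · intro h
    have hc : ((s.filter fun p => M.val w p : Finset ℕ) : Set ℕ) = ↑s ∩ {p | M.val w p} := by
      ext p; simp
    exact ⟨_, ⟨_, ⟨Finset.filter_subset _ _, hc ▸ h⟩, rfl⟩,
      (Form.mem_interp_letter (Finset.filter_subset _ _)).2 hc⟩

lemma mem_interp_consequence_succ {M : Model} {e : ℕ → Set M.W} {w : M.W} {n : ℕ} {q : Q} :
    w ∈ M.interp (consequence s T (n + 1) q) e ↔ ∃ S ∈ T q (↑s ∩ {p | M.val w p}),
      (∀ p ∈ S, ∃ v, M.R w v ∧ v ∈ M.interp (consequence s T n p) e) ∧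
      (∀ v, M.R w v → ∃ p ∈ S, v ∈ M.interp (consequence s T n p) e) := by
  classical
  have hbody : ∀ (c : Finset ℕ) (S : Finset Q),
      w ∈ M.interp (.and (Form.letter s c)
            (.and (Form.bigAnd (S.toList.map fun p => .dia (consequence s T n p)))
              (.box (Form.bigOr (S.toList.map (consequence s T n)))))) e ↔
      w ∈ M.interp (Form.letter s c) e ∧
      (∀ p ∈ S, ∃ v, M.R w v ∧ v ∈ M.interp (consequence s T n p) e) ∧
      (∀ v, M.R w v → ∃ p ∈ S, v ∈ M.interp (consequence s T n p) e) := by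
    intro c S
    simp [Model.interp, Form.mem_interp_bigAnd, Form.mem_interp_bigOr]
  simp only [consequence, Form.mem_interp_bigOr, List.mem_map, Finset.mem_toList,
    Finset.mem_filter, Finset.mem_product, Finset.mem_powerset, Finset.mem_univ, and_true]
  constructor
  · rintro ⟨_, ⟨⟨c, S⟩, ⟨hc, hS⟩, rfl⟩, hw⟩
    obtain ⟨hl, h⟩ := (hbody c S).1 hw
    refine ⟨S, ?_, h⟩
    rwa [← (Form.mem_interp_letter hc).1 hl]
  · rintro ⟨S, hS, h⟩
    have hc : ((s.filter fun p => M.val w p : Finset ℕ) : Set ℕ) = ↑s ∩ {p | M.val w p} := by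
      ext p; simp
    exact ⟨_, ⟨(_, S), ⟨Finset.filter_subset _ _, hc ▸ hS⟩, rfl⟩,
      (hbody _ S).2 ⟨(Form.mem_interp_letter (Finset.filter_subset _ _)).2 hc, h⟩⟩

/-- If acceptance within a class of trees can be decomposed along, and composed from, the
productive transitions `T`, then every state has uniform consequences of exponential size. -/
theorem exists_uniform_consequence {σ : Set ℕ} (hσ : σ.Finite) (C : Set Model)
    (hC : ∀ M ∈ C, M.IsTree) (Acc : Q → Model → Prop) (hAcc : ∀ q N, Acc q N → N ∈ C)
    (T : Q → Set ℕ → Set (Finset Q))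
    (decompose : ∀ q N, Acc q N → ∃ S ∈ T q (σ ∩ {p | N.val N.root p}),
      (∀ p ∈ S, ∃ v, N.R N.root v ∧ Acc p (N.subtree v)) ∧
      (∀ v, N.R N.root v → ∃ p ∈ S, Acc p (N.subtree v)))
    (compose_zero : ∀ q c, ∀ S ∈ T q (σ ∩ {p | c p}), ∃ N, Acc q N ∧ N.val N.root = c)
    (compose_succ : ∀ q, ∀ M ∈ C, ∀ (w : M.W) (n : ℕ), ∀ S ∈ T q (σ ∩ {p | M.val w p}),
      (∀ p ∈ S, ∃ v, M.R w v ∧ ∃ N, Acc p N ∧ BisimUpTo M N n v N.root) →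
      (∀ v, M.R w v → ∃ p ∈ S, ∃ N, Acc p N ∧ BisimUpTo M N n v N.root) →
      ∃ N, Acc q N ∧ BisimUpTo M N (n + 1) w N.root)
    (q : Q) (n : ℕ) :
    ∃ ψ : Form, ψ.IsML ∧ ψ.depth ≤ n ∧
      ψ.size ≤ 2 ^ (4 * (n + 1) * (Fintype.card Q + σ.ncard + 1)) ∧
      (∀ M ∈ C, (M.Sat ψ ↔ ∃ N, Acc q N ∧ NBisimEq M N Set.univ n)) ∧
      (∀ θ : Form, θ.IsML → θ.depth ≤ n →
        ((∀ M ∈ C, M.Sat ψ → M.Sat θ) ↔ (∀ M, Acc q M → M.Sat θ))) := by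
  obtain ⟨s, rfl⟩ := hσ.exists_finset_coe
  have key : ∀ M ∈ C, ∀ n q w, w ∈ M.interp (consequence s T n q) (fun _ => ∅) ↔
      ∃ N, Acc q N ∧ BisimUpTo M N n w N.root := by
    intro M hM n
    induction n with
    | zero =>
      intro q w
      rw [mem_interp_consequence_zero]
      constructor
      · rintro ⟨S, hS⟩
        obtain ⟨N, hN, hval⟩ := compose_zero q (M.val w) S hS
        exact ⟨N, hN, fun p => by rw [hval]⟩
      · rintro ⟨N, hN, hb⟩
        obtain ⟨S, hS, -⟩ := decompose q N hN
        refine ⟨S, ?_⟩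
        simpa only [hb.val_iff] using hS
    | succ n ih =>
      intro q w
      simp only [mem_interp_consequence_succ, ih]
      constructor
      · rintro ⟨S, hS, h₁, h₂⟩
        exact compose_succ q M hM w n S hS h₁ h₂
      · rintro ⟨N, hN, hb⟩
        obtain ⟨S, hS, h₁, h₂⟩ := decompose q N hN
        refine ⟨S, by simpa only [hb.val_iff] using hS, fun p hp => ?_, fun v hv => ?_⟩
        · obtain ⟨u, hu, hacc⟩ := h₁ p hp
          obtain ⟨v, hv, hb'⟩ := hb.2.2 u hu
          exact ⟨v, hv, _, hacc, (Model.bisimUpTo_subtree_iff M N u n v).2 hb'⟩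
        · obtain ⟨u, hu, hb'⟩ := hb.2.1 v hv
          obtain ⟨p, hp, hacc⟩ := h₂ u hu
          exact ⟨p, hp, _, hacc, (Model.bisimUpTo_subtree_iff M N u n v).2 hb'⟩
  have main : ∀ M ∈ C, (M.Sat (consequence s T n q) ↔
      ∃ N, Acc q N ∧ BisimUpTo M N n M.root N.root) := fun M hM => key M hM n q M.root
  have : Nonempty Q := ⟨q⟩
  refine ⟨consequence s T n q, isML_consequence s T n q, depth_consequence_le s T n q, ?_, ?_, ?_⟩
  · rw [Set.ncard_coe_finset]
    exact size_consequence_le s T n q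
  · intro M hM
    rw [main M hM]
    exact exists_congr fun N => and_congr_right fun hN =>
      (nBisimEq_iff_bisimUpTo (hC M hM) (hC N (hAcc q N hN)) n).symm
  · intro θ hθ hd
    constructor
    · exact fun h M hM => h M (hAcc q M hM)
        ((main M (hAcc q M hM)).2 ⟨M, hM, BisimUpTo.refl M n M.root⟩)
    · intro h M hM hψ
      obtain ⟨N, hN, hb⟩ := (main M hM).1 hψ
      exact (hb.mem_interp_iff hθ hd _ _).2 (h N hN)

end Consequence

/-! ### Automata on trees of unbounded outdegree -/

namespace NPTAU

variable {σ : Set ℕ}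

/-- Tree models accepted from the state `q`. -/
def Accepts (A : NPTAU σ) (q : A.Q) (N : Model) : Prop :=
  N.IsTree ∧ ∃ ρ : N.W → A.Q, ρ N.root = q ∧
    (∀ w, (ρ '' {v | N.R w v}) ∈ A.δ (ρ w) (σ ∩ {p | N.val w p})) ∧ PathsGood A.rank N ρ

lemma accepts_qI_iff (A : NPTAU σ) (N : Model) : A.Accepts A.qI N ↔ N.IsTree ∧ SatU N A := by
  simp only [Accepts, SatU, IsAccRunU, IsRunU, PathsGood, and_assoc]

/-- Transitions all of whose states are productive. -/
def productive (A : NPTAU σ) (q : A.Q) (c : Set ℕ) : Set (Finset A.Q) :=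
  {S | (S : Set A.Q) ∈ A.δ q c ∧ ∀ p ∈ S, ∃ N, A.Accepts p N}

lemma accepts_subtree {A : NPTAU σ} {N : Model} (hN : N.IsTree) {ρ : N.W → A.Q}
    (hρ : ∀ w, (ρ '' {v | N.R w v}) ∈ A.δ (ρ w) (σ ∩ {p | N.val w p}))
    (hgood : PathsGood A.rank N ρ) (u : N.W) : A.Accepts (ρ u) (N.subtree u) := by
  refine ⟨hN.subtree u, fun x => ρ x.1, rfl, fun w => ?_, hgood.subtree u⟩
  suffices h : (fun x : (N.subtree u).W => ρ x.1) '' {v | (N.subtree u).R w v} =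
      ρ '' {v | N.R w.1 v} by
    rw [h]
    exact hρ w.1
  ext p
  constructor
  · rintro ⟨v, hv, rfl⟩
    exact ⟨v.1, hv, rfl⟩
  · rintro ⟨v, hv, rfl⟩
    exact ⟨⟨v, w.2.tail hv⟩, hv, rfl⟩

lemma accepts_join {A : NPTAU σ} {q : A.Q} {I : Type} {c : ℕ → Prop} {f : I → Model}
    {st : I → A.Q} (hst : Set.range st ∈ A.δ q (σ ∩ {p | c p}))
    (hf : ∀ i, A.Accepts (st i) (f i)) : A.Accepts q (Model.join c f) := by
  choose htree ρ hroot hρ hgood using hf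
  refine ⟨Model.join_isTree htree, Model.joinLabel q ρ, rfl, ?_, PathsGood.join hgood q⟩
  rintro (_ | ⟨i, x⟩)
  · suffices h : Model.joinLabel (c := c) q ρ '' {v | (Model.join c f).R none v} =
        Set.range st by
      rw [h]
      exact hst
    ext p
    constructor
    · rintro ⟨v, hv, rfl⟩
      obtain ⟨i, rfl⟩ := Model.join_rel_none_iff.1 hv
      exact ⟨i, (hroot i).symm⟩
    · rintro ⟨i, rfl⟩
      exact ⟨some ⟨i, (f i).root⟩, Model.JoinRel.root i, hroot i⟩
  · suffices h : Model.joinLabel (c := c) q ρ '' {v | (Model.join c f).R (some ⟨i, x⟩) v} =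
        ρ i '' {v | (f i).R x v} by
      rw [h]
      exact hρ i x
    ext p
    constructor
    · rintro ⟨v, hv, rfl⟩
      obtain ⟨y, rfl, hy⟩ := Model.join_rel_some_iff.1 hv
      exact ⟨y, hy, rfl⟩
    · rintro ⟨y, hy, rfl⟩
      exact ⟨some ⟨i, y⟩, Model.JoinRel.step i x y hy, rfl⟩

theorem exists_uniform_consequence (hσ : σ.Finite) (A : NPTAU σ) (n : ℕ) :
    ∃ ψ : Form, ψ.IsML ∧ ψ.depth ≤ n ∧
      ψ.size ≤ 2 ^ (4 * (n + 1) * (A.card + σ.ncard + 1)) ∧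
      (∀ M : Model, M.IsTree →
        (M.Sat ψ ↔ ∃ N, A.Accepts A.qI N ∧ NBisimEq M N Set.univ n)) ∧
      (∀ θ : Form, θ.IsML → θ.depth ≤ n →
        ((∀ M : Model, M.IsTree → M.Sat ψ → M.Sat θ) ↔
          (∀ M, A.Accepts A.qI M → M.Sat θ))) := by
  let _ := A.fin
  refine _root_.exists_uniform_consequence hσ {M | M.IsTree} (fun _ h => h) A.Accepts
    (fun _ _ h => h.1) A.productive ?_ ?_ ?_ A.qI n
  · rintro _ N ⟨hN, ρ, rfl, hρ, hgood⟩
    refine ⟨(Set.toFinite (ρ '' {v | N.R N.root v})).toFinset, ⟨?_, ?_⟩, ?_, ?_⟩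
    · rw [Set.Finite.coe_toFinset]
      exact hρ N.root
    · simp only [Set.Finite.mem_toFinset]
      rintro _ ⟨v, -, rfl⟩
      exact ⟨_, accepts_subtree hN hρ hgood v⟩
    · simp only [Set.Finite.mem_toFinset]
      rintro _ ⟨v, hv, rfl⟩
      exact ⟨v, hv, accepts_subtree hN hρ hgood v⟩
    · simp only [Set.Finite.mem_toFinset]
      exact fun v hv => ⟨ρ v, ⟨v, hv, rfl⟩, accepts_subtree hN hρ hgood v⟩
  · rintro q c S ⟨hS, hprod⟩
    choose f hf using fun p : S => hprod p.1 p.2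
    exact ⟨Model.join c f, accepts_join (st := Subtype.val) (by simpa using hS) hf, rfl⟩
  · rintro q M - w n S ⟨hS, -⟩ h₁ h₂
    let I := {x : M.W × A.Q // M.R w x.1 ∧ x.2 ∈ S ∧
      ∃ N, A.Accepts x.2 N ∧ BisimUpTo M N n x.1 N.root}
    choose f hf hb using fun i : I => i.2.2.2
    refine ⟨Model.join (M.val w) f, accepts_join (st := fun i => i.1.2) ?_ hf,
      Model.bisimUpTo_join_root (fun v hv => ?_) fun i => ⟨i.1.1, i.2.1, hb i⟩⟩
    · convert hS using 1
      ext p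
      constructor
      · rintro ⟨i, rfl⟩
        exact i.2.2.1
      · intro hp
        obtain ⟨v, hv, h⟩ := h₁ p hp
        exact ⟨⟨(v, p), hv, hp, h⟩, rfl⟩
    · obtain ⟨p, hp, h⟩ := h₂ v hv
      exact ⟨⟨(v, p), hv, hp, h⟩, hb ⟨(v, p), hv, hp, h⟩⟩

end NPTAU

/-! ### Automata on binary trees -/

namespace NPTA

variable {σ : Set ℕ}

/-- Trees of outdegree at most two accepted from the state `q`. -/
def Accepts (A : NPTA σ) (q : A.Q) (N : Model) : Prop :=
  N ∈ TreeC 2 ∧ ∃ ρ : N.W → A.Q, ρ N.root = q ∧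
    (∀ w, ∃ l : List N.W, l.Nodup ∧ (∀ v, v ∈ l ↔ N.R w v) ∧
      l.map ρ ∈ A.δ (ρ w) (σ ∩ {p | N.val w p})) ∧ PathsGood A.rank N ρ

lemma accepts_qI_iff (A : NPTA σ) (N : Model) : A.Accepts A.qI N ↔ N ∈ TreeC 2 ∧ SatA N A := by
  simp only [Accepts, SatA, IsAccRun, IsRun, PathsGood, and_assoc]

/-- State sets of transitions all of whose states are productive. -/
def productive (A : NPTA σ) (q : A.Q) (c : Set ℕ) : Set (Finset A.Q) :=
  {S | (∃ l ∈ A.δ q c, ∀ p, p ∈ S ↔ p ∈ l) ∧ ∀ p ∈ S, ∃ N, A.Accepts p N}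

lemma accepts_subtree {A : NPTA σ} {N : Model} (hN : N ∈ TreeC 2) {ρ : N.W → A.Q}
    (hρ : ∀ w, ∃ l : List N.W, l.Nodup ∧ (∀ v, v ∈ l ↔ N.R w v) ∧
      l.map ρ ∈ A.δ (ρ w) (σ ∩ {p | N.val w p}))
    (hgood : PathsGood A.rank N ρ) (u : N.W) : A.Accepts (ρ u) (N.subtree u) := by
  refine ⟨⟨hN.1.subtree u, hN.2.subtree u⟩, fun x => ρ x.1, rfl, fun w => ?_, hgood.subtree u⟩
  obtain ⟨l, hnd, hmem, hl⟩ := hρ w.1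
  refine ⟨l.pmap Subtype.mk fun v hv => w.2.tail ((hmem v).1 hv), ?_, fun v => ?_, ?_⟩
  · exact hnd.pmap fun a _ b _ h => congrArg Subtype.val h
  · refine Iff.trans ?_ (hmem v.1)
    rw [List.mem_pmap]
    exact ⟨by rintro ⟨a, ha, rfl⟩; exact ha, fun h => ⟨v.1, h, rfl⟩⟩
  · rw [List.map_pmap]
    simpa using hl

lemma accepts_join {A : NPTA σ} {q : A.Q} {I : Type} {c : ℕ → Prop} {f : I → Model}
    {st : I → A.Q} {L : List I} (hnd : L.Nodup) (hL : ∀ i, i ∈ L) (hlen : L.length ≤ 2)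
    (hst : L.map st ∈ A.δ q (σ ∩ {p | c p}))
    (hf : ∀ i, A.Accepts (st i) (f i)) : A.Accepts q (Model.join c f) := by
  choose htree ρ hroot hρ hgood using hf
  refine ⟨⟨Model.join_isTree fun i => (htree i).1, Model.join_outdegLE (fun g hg => ?_)
    fun i => (htree i).2⟩, Model.joinLabel q ρ, rfl, ?_, PathsGood.join hgood q⟩
  · have := ((List.nodup_ofFn.2 hg).subperm fun i _ => hL i).length_le
    rw [List.length_ofFn] at this
    omega
  rintro (_ | ⟨i, x⟩)
  · refine ⟨L.map fun i => some ⟨i, (f i).root⟩, hnd.map fun i j hij => ?_, fun v => ?_, ?_⟩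
    · exact congrArg Sigma.fst (Option.some.inj hij)
    · rw [Model.join_rel_none_iff, List.mem_map]
      exact ⟨fun ⟨i, _, h⟩ => ⟨i, h.symm⟩, fun ⟨i, h⟩ => ⟨i, hL i, h.symm⟩⟩
    · have h : Model.joinLabel (c := c) q ρ ∘ (fun i => some ⟨i, (f i).root⟩) = st :=
        funext hroot
      rw [List.map_map, h]
      exact hst
  · obtain ⟨l, hnd', hmem, hl⟩ := hρ i x
    refine ⟨l.map fun y => some ⟨i, y⟩, hnd'.map fun y z hyz => ?_, fun v => ?_, ?_⟩
    · simpa using hyz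
    · rw [Model.join_rel_some_iff, List.mem_map]
      simp only [hmem]
      exact ⟨fun ⟨y, h, h'⟩ => ⟨y, h'.symm, h⟩, fun ⟨y, h', h⟩ => ⟨y, h, h'.symm⟩⟩
    · rw [List.map_map]
      exact hl

lemma accepts_join_empty {A : NPTA σ} {q : A.Q} {c : ℕ → Prop} (f : Empty → Model)
    (h : [] ∈ A.δ q (σ ∩ {p | c p})) : A.Accepts q (Model.join c f) :=
  accepts_join (st := Empty.elim) (L := []) List.nodup_nil (fun i => i.elim) (by simp) h
    fun i => i.elim

lemma accepts_join_pair {A : NPTA σ} {q p₁ p₂ : A.Q} {c : ℕ → Prop} {N₁ N₂ : Model}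
    (h : [p₁, p₂] ∈ A.δ q (σ ∩ {p | c p})) (h₁ : A.Accepts p₁ N₁) (h₂ : A.Accepts p₂ N₂) :
    A.Accepts q (Model.join c fun b : Bool => bif b then N₁ else N₂) :=
  accepts_join (st := fun b => bif b then p₁ else p₂) (L := [true, false]) (by simp)
    (fun b => by cases b <;> simp) (by simp) h
    fun b => by cases b <;> assumption

/-- In duplication safe automata, transitions may be taken to have length zero or two. -/
lemma productive_cases {A : NPTA σ} (hlen : ∀ q ch l, l ∈ A.δ q ch → l.length ≤ 2)
    (hdup : DupSafe A) {q : A.Q} {c : Set ℕ} {S : Finset A.Q} (hS : S ∈ A.productive q c) :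
    ([] ∈ A.δ q c ∧ ∀ p, p ∉ S) ∨
      ∃ p₁ p₂, [p₁, p₂] ∈ A.δ q c ∧ ∀ p, p ∈ S ↔ p = p₁ ∨ p = p₂ := by
  obtain ⟨⟨l, hl, hmem⟩, -⟩ := hS
  match l, hl, hlen _ _ _ hl with
  | [], hl, _ => exact .inl ⟨hl, by simpa using hmem⟩
  | [p], hl, _ => exact .inr ⟨p, p, hdup _ _ _ hl, by simpa using hmem⟩
  | [p₁, p₂], hl, _ => exact .inr ⟨p₁, p₂, hl, by simpa using hmem⟩
  | _ :: _ :: _ :: _, _, h => simp at h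

/-- At most two points each satisfying `G₁` or `G₂`, with both properties realized,
can be covered by a point satisfying `G₁` and a point satisfying `G₂`. -/
lemma exists_cover_pair {W : Type} {K : Set W} (hK : ¬ AtLeastCard 3 K) {G₁ G₂ : W → Prop}
    (h₁ : ∃ v ∈ K, G₁ v) (h₂ : ∃ v ∈ K, G₂ v) (h : ∀ v ∈ K, G₁ v ∨ G₂ v) :
    ∃ v₁ ∈ K, ∃ v₂ ∈ K, G₁ v₁ ∧ G₂ v₂ ∧ ∀ v ∈ K, v = v₁ ∨ v = v₂ := by
  have hthree : ∀ a ∈ K, ∀ b ∈ K, a ≠ b → ∀ v ∈ K, v = a ∨ v = b := by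
    intro a ha b hb hab v hv
    by_contra! hne
    refine hK ⟨![a, b, v], ?_, ?_⟩
    · intro i j hij
      fin_cases i <;> fin_cases j <;> simp_all
    · intro i
      fin_cases i <;> assumption
  obtain ⟨a, ha, hGa⟩ := h₁
  obtain ⟨b, hb, hGb⟩ := h₂
  by_cases hab : a = b
  · subst hab
    by_cases hd : ∃ d ∈ K, d ≠ a
    · obtain ⟨d, hdK, hne⟩ := hd
      rcases h d hdK with hG | hG
      · exact ⟨d, hdK, a, ha, hG, hGb, hthree d hdK a ha hne⟩
      · exact ⟨a, ha, d, hdK, hGa, hG, hthree a ha d hdK hne.symm⟩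
    · push Not at hd
      exact ⟨a, ha, a, ha, hGa, hGb, fun v hv => .inl (hd v hv)⟩
  · exact ⟨a, ha, b, hb, hGa, hGb, hthree a ha b hb hab⟩

theorem exists_uniform_consequence (hσ : σ.Finite) (A : NPTA σ)
    (hlen : ∀ q ch l, l ∈ A.δ q ch → l.length ≤ 2) (hdup : DupSafe A) (n : ℕ) :
    ∃ ψ : Form, ψ.IsML ∧ ψ.depth ≤ n ∧
      ψ.size ≤ 2 ^ (4 * (n + 1) * (A.card + σ.ncard + 1)) ∧
      (∀ M ∈ TreeC 2, (M.Sat ψ ↔ ∃ N, A.Accepts A.qI N ∧ NBisimEq M N Set.univ n)) ∧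
      (∀ θ : Form, θ.IsML → θ.depth ≤ n →
        ((∀ M ∈ TreeC 2, M.Sat ψ → M.Sat θ) ↔ (∀ M, A.Accepts A.qI M → M.Sat θ))) := by
  classical
  let _ := A.fin
  refine _root_.exists_uniform_consequence hσ (TreeC 2) (fun _ h => h.1) A.Accepts
    (fun _ _ h => h.1) A.productive ?_ ?_ ?_ A.qI n
  · rintro _ N ⟨hN, ρ, rfl, hρ, hgood⟩
    obtain ⟨l, -, hmem, hl⟩ := hρ N.root
    refine ⟨(l.map ρ).toFinset, ⟨⟨_, hl, fun p => List.mem_toFinset⟩, ?_⟩, ?_, ?_⟩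
    · simp only [List.mem_toFinset, List.mem_map]
      rintro _ ⟨v, -, rfl⟩
      exact ⟨_, accepts_subtree hN hρ hgood v⟩
    · simp only [List.mem_toFinset, List.mem_map]
      rintro _ ⟨v, hv, rfl⟩
      exact ⟨v, (hmem v).1 hv, accepts_subtree hN hρ hgood v⟩
    · simp only [List.mem_toFinset, List.mem_map]
      exact fun v hv => ⟨ρ v, ⟨v, (hmem v).2 hv, rfl⟩, accepts_subtree hN hρ hgood v⟩
  · intro q c S hS
    rcases productive_cases hlen hdup hS with ⟨h, -⟩ | ⟨p₁, p₂, h, hp⟩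
    · exact ⟨_, accepts_join_empty Empty.elim h, rfl⟩
    · obtain ⟨N₁, h₁⟩ := hS.2 p₁ ((hp p₁).2 (.inl rfl))
      obtain ⟨N₂, h₂⟩ := hS.2 p₂ ((hp p₂).2 (.inr rfl))
      exact ⟨_, accepts_join_pair h h₁ h₂, rfl⟩
  · intro q M hM w n S hS h₁ h₂
    rcases productive_cases hlen hdup hS with ⟨h, hp⟩ | ⟨p₁, p₂, h, hp⟩
    · refine ⟨_, accepts_join_empty Empty.elim h,
        Model.bisimUpTo_join_root (fun v hv => ?_) fun i => i.elim⟩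
      obtain ⟨p, hpS, -⟩ := h₂ v hv
      exact (hp p hpS).elim
    · obtain ⟨v₁, hv₁, v₂, hv₂, ⟨N₁, hN₁, hb₁⟩, ⟨N₂, hN₂, hb₂⟩, hcover⟩ :=
        exists_cover_pair (hM.2 w) (h₁ p₁ ((hp p₁).2 (.inl rfl)))
          (h₁ p₂ ((hp p₂).2 (.inr rfl))) (fun v hv => by
            obtain ⟨p, hpS, hG⟩ := h₂ v hv
            rcases (hp p).1 hpS with rfl | rfl
            · exact .inl hG
            · exact .inr hG)
      refine ⟨_, accepts_join_pair h hN₁ hN₂,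
        Model.bisimUpTo_join_root (fun v hv => ?_) fun b => ?_⟩
      · rcases hcover v hv with rfl | rfl
        · exact ⟨true, hb₁⟩
        · exact ⟨false, hb₂⟩
      · cases b
        · exact ⟨v₂, hv₂, hb₂⟩
        · exact ⟨v₁, hv₁, hb₁⟩

end NPTA

/-- construction of `ML^n`-uniform consequences of an NPTA, over the class of
all (tree) models and over `T^2` (for duplication safe automata); the constructed formula
`ψ` satisfies `M ⊨ ψ  iff  ∃ N ∈ C, N ⊨ A and M ≈ⁿ N`, and its size is at most
`|A|^{O(n·|A|)}` resp. `2^{O(n·|A|)}` (measuring the automaton together with its alphabet). -/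
theorem stmt_5 : ∃ c : ℕ,
    (∀ (σ : Set ℕ), σ.Finite → ∀ (A : NPTAU σ) (n : ℕ),
      ∃ ψ : Form, ψ.IsML ∧ ψ.depth ≤ n ∧
        ψ.size ≤ (A.card + σ.ncard + 2) ^ (c * (n + 1) * (A.card + σ.ncard + 1)) ∧
        (∀ M : Model, M.IsTree →
          (M.Sat ψ ↔ ∃ N : Model, N.IsTree ∧ SatU N A ∧ NBisimEq M N Set.univ n)) ∧
        (∀ θ : Form, θ.IsML → θ.depth ≤ n →
          ((∀ M : Model, M.IsTree → M.Sat ψ → M.Sat θ) ↔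
           (∀ M : Model, M.IsTree → SatU M A → M.Sat θ)))) ∧
    (∀ (σ : Set ℕ), σ.Finite → ∀ (A : NPTA σ),
      (∀ q ch l, l ∈ A.δ q ch → l.length ≤ 2) → DupSafe A → ∀ n : ℕ,
      ∃ ψ : Form, ψ.IsML ∧ ψ.depth ≤ n ∧
        ψ.size ≤ 2 ^ (c * (n + 1) * (A.card + σ.ncard + 1)) ∧
        (∀ M ∈ TreeC 2, (M.Sat ψ ↔ ∃ N ∈ TreeC 2, SatA N A ∧ NBisimEq M N Set.univ n)) ∧
        (∀ θ : Form, θ.IsML → θ.depth ≤ n →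
          ((∀ M ∈ TreeC 2, M.Sat ψ → M.Sat θ) ↔
           (∀ M ∈ TreeC 2, SatA M A → M.Sat θ)))) := by
  refine ⟨4, fun σ hσ A n => ?_, fun σ hσ A hlen hdup n => ?_⟩
  · obtain ⟨ψ, hML, hdepth, hsize, hiff, hcons⟩ := A.exists_uniform_consequence hσ n
    simp only [NPTAU.accepts_qI_iff, and_assoc, and_imp] at hiff hcons
    exact ⟨ψ, hML, hdepth, hsize.trans (Nat.pow_le_pow_left (by omega) _), hiff, hcons⟩
  · obtain ⟨ψ, hML, hdepth, hsize, hiff, hcons⟩ :=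
      A.exists_uniform_consequence hσ hlen hdup n
    simp only [NPTA.accepts_qI_iff, and_assoc, and_imp] at hiff hcons
    exact ⟨ψ, hML, hdepth, hsize, hiff, hcons⟩
end

section
/- Let M and M' be full binary trees (every point is either a leaf or has exactly two successors) and let σ be a signature. If M and M' are σ-bisimilar then they are σ-isomorphic; in fact, every bisimulation Z between the σ-reducts of M and M' contains a bijective bisimulation Z' ⊆ Z. -/
/-- (Unbounded) `σ`-bisimulations between trees: they link the roots, relate only points of
equal depth, and satisfy the base (w.r.t. `σ`), forth and back conditions. -/
structure IsSigBisim (M M' : Model) (σ : Set ℕ) (Z : M.W → M'.W → Prop) : Prop where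
  root : Z M.root M'.root
  depthEq : ∀ ⦃w w'⦄, Z w w' → ∃ k, M.stepsTo k w ∧ M'.stepsTo k w'
  base : ∀ ⦃w w'⦄, Z w w' → ∀ p ∈ σ, (M.val w p ↔ M'.val w' p)
  forth : ∀ ⦃w w'⦄, Z w w' → ∀ v, M.R w v → ∃ v', M'.R w' v' ∧ Z v v'
  back : ∀ ⦃w w'⦄, Z w w' → ∀ v', M'.R w' v' → ∃ v, M.R w v ∧ Z v v'

/-- Full binary trees: every point is a leaf or has exactly two successors. -/
def IsFullBinary (M : Model) : Prop :=
  ∀ w : M.W, (∀ v, ¬ M.R w v) ∨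
    ∃ v₁ v₂, v₁ ≠ v₂ ∧ M.R w v₁ ∧ M.R w v₂ ∧ ∀ v, M.R w v → v = v₁ ∨ v = v₂

/-- A relation is bijective: functional, injective, total and surjective. -/
def BijRel {α β : Type} (Z : α → β → Prop) : Prop :=
  (∀ a b₁ b₂, Z a b₁ → Z a b₂ → b₁ = b₂) ∧ (∀ a₁ a₂ b, Z a₁ b → Z a₂ b → a₁ = a₂) ∧
  (∀ a, ∃ b, Z a b) ∧ (∀ b, ∃ a, Z a b)

/-- Between full binary trees, the successors of two related points can be matched bijectively
within the bisimulation. -/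
theorem IsSigBisim.exists_matching {M M' : Model} {σ : Set ℕ} {Z : M.W → M'.W → Prop}
    (hZ : IsSigBisim M M' σ Z) (hfb : IsFullBinary M) (hfb' : IsFullBinary M')
    {w : M.W} {w' : M'.W} (h : Z w w') :
    ∃ P : M.W → M'.W → Prop,
      (∀ v v', P v v' → M.R w v ∧ M'.R w' v' ∧ Z v v') ∧
      (∀ v v₁' v₂', P v v₁' → P v v₂' → v₁' = v₂') ∧
      (∀ v₁ v₂ v', P v₁ v' → P v₂ v' → v₁ = v₂) ∧
      (∀ v, M.R w v → ∃ v', P v v') ∧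
      (∀ v', M'.R w' v' → ∃ v, P v v') := by
  have forth := hZ.forth h
  have back := hZ.back h
  rcases hfb w with hl | ⟨v₁, v₂, hne, hv₁, hv₂, hv⟩
  · refine ⟨fun _ _ => False, by simp, by simp, by simp, fun v hv => (hl v hv).elim, ?_⟩
    intro v' hv'
    obtain ⟨v, hv, -⟩ := back v' hv'
    exact (hl v hv).elim
  rcases hfb' w' with hl' | ⟨u₁, u₂, hne', hu₁, hu₂, hu⟩
  · obtain ⟨v', hv', -⟩ := forth v₁ hv₁
    exact (hl' v' hv').elim
  have key : (Z v₁ u₁ ∧ Z v₂ u₂) ∨ (Z v₁ u₂ ∧ Z v₂ u₁) := by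
    have f₁ := forth v₁ hv₁
    have f₂ := forth v₂ hv₂
    have b₁ := back u₁ hu₁
    have b₂ := back u₂ hu₂
    grind
  rcases key with ⟨h₁, h₂⟩ | ⟨h₁, h₂⟩
  · exact ⟨fun v v' => (v = v₁ ∧ v' = u₁) ∨ (v = v₂ ∧ v' = u₂),
      by grind, by grind, by grind, by grind, by grind⟩
  · exact ⟨fun v v' => (v = v₁ ∧ v' = u₂) ∨ (v = v₂ ∧ v' = u₁),
      by grind, by grind, by grind, by grind, by grind⟩

/-- The relation generated from the roots by following matchings `P w w'` of successors. -/
inductive MatchingClosure (M M' : Model) (P : M.W → M'.W → M.W → M'.W → Prop) :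
    M.W → M'.W → Prop
  | root : MatchingClosure M M' P M.root M'.root
  | step {w w' v v'} : MatchingClosure M M' P w w' → M.R w v → M'.R w' v' → P w w' v v' →
      MatchingClosure M M' P v v'

/-- Every `σ`-bisimulation between full binary trees contains a bijective one. -/
theorem IsSigBisim.exists_bijRel {M M' : Model} {σ : Set ℕ} {Z : M.W → M'.W → Prop}
    (hZ : IsSigBisim M M' σ Z) (hM : M.IsTree) (hM' : M'.IsTree)
    (hfb : IsFullBinary M) (hfb' : IsFullBinary M') :
    ∃ Z', (∀ w w', Z' w w' → Z w w') ∧ IsSigBisim M M' σ Z' ∧ BijRel Z' := by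
  obtain ⟨hreach, hroot, huniq⟩ := hM
  obtain ⟨hreach', hroot', huniq'⟩ := hM'
  choose! P hPsub hPfun hPinj hPtot hPsurj using
    fun w w' (h : Z w w') => hZ.exists_matching hfb hfb' h
  have sub : ∀ w w', MatchingClosure M M' P w w' → Z w w' := by
    intro w w' h
    induction h with
    | root => exact hZ.root
    | step _ _ _ hP ih => exact (hPsub _ _ ih _ _ hP).2.2
  have forth : ∀ w w', MatchingClosure M M' P w w' → ∀ v, M.R w v →
      ∃ v', M'.R w' v' ∧ MatchingClosure M M' P v v' := by
    intro w w' h v hv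
    obtain ⟨v', hP⟩ := hPtot _ _ (sub _ _ h) v hv
    have hv' := (hPsub _ _ (sub _ _ h) _ _ hP).2.1
    exact ⟨v', hv', h.step hv hv' hP⟩
  have back : ∀ w w', MatchingClosure M M' P w w' → ∀ v', M'.R w' v' →
      ∃ v, M.R w v ∧ MatchingClosure M M' P v v' := by
    intro w w' h v' hv'
    obtain ⟨v, hP⟩ := hPsurj _ _ (sub _ _ h) v' hv'
    have hv := (hPsub _ _ (sub _ _ h) _ _ hP).1
    exact ⟨v, hv, h.step hv hv' hP⟩
  refine ⟨MatchingClosure M M' P, sub,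
    ⟨.root, fun _ _ h => hZ.depthEq (sub _ _ h), fun _ _ h => hZ.base (sub _ _ h), forth, back⟩,
    ?_, ?_, ?_, ?_⟩
  · intro a b₁ b₂ h₁
    induction h₁ generalizing b₂ with
    | root =>
      intro h₂
      generalize hr : M.root = r at h₂
      cases h₂ with
      | root => rfl
      | step _ hR _ _ => exact (hroot _ (hr ▸ hR)).elim
    | step h hR _ hP ih =>
      intro h₂
      cases h₂ with
      | root => exact (hroot _ hR).elim
      | step g gR _ gP =>
        obtain rfl := huniq _ _ _ hR gR
        obtain rfl := ih _ g
        exact hPfun _ _ (sub _ _ h) _ _ _ hP gP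
  · intro a₁ a₂ b h₁
    induction h₁ generalizing a₂ with
    | root =>
      intro h₂
      generalize hr : M'.root = r at h₂
      cases h₂ with
      | root => rfl
      | step _ _ hR _ => exact (hroot' _ (hr ▸ hR)).elim
    | step h _ hR hP ih =>
      intro h₂
      cases h₂ with
      | root => exact (hroot' _ hR).elim
      | step g _ gR gP =>
        obtain rfl := huniq' _ _ _ hR gR
        obtain rfl := ih _ g
        exact hPinj _ _ (sub _ _ h) _ _ _ hP gP
  · intro a
    induction hreach a with
    | refl => exact ⟨_, .root⟩
    | tail _ hR ih =>
      obtain ⟨b, hb⟩ := ih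
      obtain ⟨v', -, h⟩ := forth _ _ hb _ hR
      exact ⟨v', h⟩
  · intro b
    induction hreach' b with
    | refl => exact ⟨_, .root⟩
    | tail _ hR ih =>
      obtain ⟨a, ha⟩ := ih
      obtain ⟨v, -, h⟩ := back _ _ ha _ hR
      exact ⟨v, h⟩

/-- between full binary trees, every `σ`-bisimulation contains a bijective
`σ`-bisimulation; in particular `σ`-bisimilar full binary trees are `σ`-isomorphic. -/
theorem stmt_7 (M M' : Model) (σ : Set ℕ) (hM : M.IsTree) (hM' : M'.IsTree)
    (hfb : IsFullBinary M) (hfb' : IsFullBinary M') :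
    (∀ Z, IsSigBisim M M' σ Z →
      ∃ Z', (∀ w w', Z' w w' → Z w w') ∧ IsSigBisim M M' σ Z' ∧ BijRel Z') ∧
    ((∃ Z, IsSigBisim M M' σ Z) → ∃ Z, IsSigBisim M M' σ Z ∧ BijRel Z) := by
  refine ⟨fun Z hZ => hZ.exists_bijRel hM hM' hfb hfb', ?_⟩
  rintro ⟨Z, hZ⟩
  obtain ⟨Z', -, hZ'⟩ := hZ.exists_bijRel hM hM' hfb hfb'
  exact ⟨Z', hZ'⟩
end
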